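/- The property of non-planarity is strong: for all graphs G and H, G ≡^Φₛ H if and only if both G and H are non-planar, or G = H, where Φ is the set of non-planar graphs. -/

import Mathlib

/-- Graphs are finite sets of edges, an edge being a 2-element subset of the
vertex type `V`. -/
abbrev EGraph (V : Type) [DecidableEq V] := Finset {e : Finset V // e.card = 2}

/-- The vertex set of a graph: all endpoints of its edges (no isolated vertices). -/
def EGraph.verts {V : Type} [DecidableEq V] (G : EGraph V) : Finset V :=
  G.sup (fun e => e.1)

/-- A graph is planar if it has a drawing in the plane: an injective placement
of its vertices together with, for each edge, a simple continuous arc joining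
the images of its endpoints, such that two distinct arcs meet only in the
images of common endpoints and no arc passes through the image of a vertex
other than its endpoints. -/
def EGraph.IsPlanar {V : Type} [DecidableEq V] (G : EGraph V) : Prop :=
  ∃ (pos : V → ℝ × ℝ) (arc : {e : Finset V // e.card = 2} → ℝ → ℝ × ℝ),
    Set.InjOn pos (EGraph.verts G : Set V) ∧
    (∀ e ∈ G, ContinuousOn (arc e) (Set.Icc 0 1) ∧
      Set.InjOn (arc e) (Set.Icc 0 1)) ∧
    (∀ e ∈ G, ∃ u v : V, u ≠ v ∧ e.1 = ({u, v} : Finset V) ∧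
      arc e 0 = pos u ∧ arc e 1 = pos v) ∧
    (∀ e ∈ G, ∀ f ∈ G, e ≠ f →
      arc e '' Set.Icc 0 1 ∩ arc f '' Set.Icc 0 1 ⊆
        pos '' ((e.1 ∩ f.1 : Finset V) : Set V)) ∧
    (∀ e ∈ G, ∀ w ∈ EGraph.verts G, pos w ∈ arc e '' Set.Icc 0 1 → w ∈ e.1)

/-!
If `H` is planar and lacks the edge `uv`, some planar `F ⊇ H` has a non-planar extension `F + uv`,
so a graph containing `uv` is separated from `H`. Planarity may be tested on polygonal drawings.
Suppose `H + uv` is planar and, after adding pendant edges, `u` has two further neighbours. Let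
`F ⊇ H` be maximal planar on the same vertices among the graphs without `uv`. If `F + uv` is still
planar, put a new vertex `ζ` on `uv` close to `u` and join it to the angular neighbours `x` and `y`
of `v` around `u`. Any two of `v`, `x`, `y` are now joined by a path through `ζ`, so by maximality
they are adjacent in `F`; restoring `uv` turns `u, v, x, y, ζ` into a complete graph, which is not
planar: an arc leaving `x` inside a closed polygon through `x` and an arc leaving it outside see
different winding numbers, so the four edges at a vertex of `K₅` cannot be arranged around it.
-/

open Set Filter Topology

section Segment

theorem segment_subset_segment_right {E : Type*} [AddCommGroup E] [Module ℝ E] {a b p : E}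
    (hp : p ∈ segment ℝ a b) : segment ℝ p b ⊆ segment ℝ a b :=
  (convex_segment a b).segment_subset hp (right_mem_segment ℝ a b)

theorem segment_subset_segment_left {E : Type*} [AddCommGroup E] [Module ℝ E] {a b p : E}
    (hp : p ∈ segment ℝ a b) : segment ℝ a p ⊆ segment ℝ a b :=
  (convex_segment a b).segment_subset (left_mem_segment ℝ a b) hp

theorem segment_subset_union_segment {E : Type*} [AddCommGroup E] [Module ℝ E] {a b p : E}
    (hp : p ∈ segment ℝ a b) : segment ℝ a b ⊆ segment ℝ p a ∪ segment ℝ p b := by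
  rw [segment_eq_image_lineMap] at hp
  obtain ⟨t, ht, rfl⟩ := hp
  rw [segment_eq_image_lineMap ℝ a b]
  rintro _ ⟨s, hs, rfl⟩
  have segment_lineMap_endpoint (r : ℝ) (hr : s ∈ segment ℝ t r) : AffineMap.lineMap a b s ∈
      segment ℝ (AffineMap.lineMap a b t) (AffineMap.lineMap a b r) := by
    rw [← image_segment ℝ (AffineMap.lineMap a b : ℝ →ᵃ[ℝ] E)]
    exact ⟨s, hr, rfl⟩
  rcases le_total s t with hst | hst
  · left
    simpa using segment_lineMap_endpoint 0
      (by rw [segment_symm, segment_eq_Icc ht.1]; exact ⟨hs.1, hst⟩)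
  · right
    simpa using segment_lineMap_endpoint 1 (by rw [segment_eq_Icc ht.2]; exact ⟨hst, hs.2⟩)

theorem segment_inter_segment_subset_iff {E : Type*} [AddCommGroup E] [Module ℝ E]
    {p a b : E} (ha : a ≠ p) (hb : b ≠ p) :
    segment ℝ p a ∩ segment ℝ p b ⊆ {p} ↔ ¬SameRay ℝ (a - p) (b - p) := by
  refine ⟨fun h hab => ?_, fun h x hx => by_contra fun hxp => h ?_⟩
  · rw [← vsub_eq_sub, ← vsub_eq_sub] at hab
    rcases wbtw_total_of_sameRay_vsub_left hab with hw | hw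
    · exact ha (h ⟨right_mem_segment ℝ p a, mem_segment_iff_wbtw.2 hw⟩)
    · exact hb (h ⟨mem_segment_iff_wbtw.2 hw, right_mem_segment ℝ p b⟩)
  · exact (mem_segment_iff_wbtw.1 hx.1).sameRay_vsub_left.symm.trans
      (mem_segment_iff_wbtw.1 hx.2).sameRay_vsub_left fun h0 => (hxp (sub_eq_zero.1 h0)).elim

theorem segment_inter_segment_subset_of_mem {E : Type*} [AddCommGroup E] [Module ℝ E] {a b p : E}
    (hp : p ∈ segment ℝ a b) : segment ℝ a p ∩ segment ℝ p b ⊆ {p} := by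
  rintro x ⟨hax, hxb⟩
  rw [mem_segment_iff_wbtw] at hp hax hxb
  exact wbtw_swap_right_iff ℝ a |>.1 ⟨hax, hp.trans_right_left hxb⟩

variable {E : Type*} [NormedAddCommGroup E] [NormedSpace ℝ E]

theorem isCompact_segment (a b : E) : IsCompact (segment ℝ a b) := by
  rw [segment_eq_image_lineMap]
  exact isCompact_Icc.image (by fun_prop)

theorem isPreconnected_segment_sdiff_left (a b : E) : IsPreconnected (segment ℝ a b \ {a}) := by
  rcases eq_or_ne a b with rfl | hab
  · simp [isPreconnected_empty]
  · refine (convex_openSegment a b).isPreconnected.subset_closure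
      (subset_sdiff_singleton (openSegment_subset_segment ℝ a b) ?_)
      (sdiff_subset.trans segment_subset_closure_openSegment)
    rwa [left_mem_openSegment_iff]

theorem exists_segment_inter_subset_singleton (a b : E) {A : Set E} (hA : IsCompact A)
    (hb : b ∈ A) : ∃ p ∈ A, p ∈ segment ℝ a b ∧ segment ℝ a p ∩ A ⊆ {p} := by
  obtain ⟨p, hp, hmin⟩ := ((isCompact_segment a b).inter_right hA.isClosed).exists_isMinOn
    ⟨b, right_mem_segment ℝ a b, hb⟩ (f := dist a) (by fun_prop)
  refine ⟨p, hp.2, hp.1, fun x ⟨hxp, hxA⟩ => ?_⟩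
  have hle : dist a p ≤ dist a x := hmin ⟨segment_subset_segment_left hp.1 hxp, hxA⟩
  have hsum := dist_add_dist_of_mem_segment hxp
  exact dist_le_zero.1 (by linarith)

end Segment

section PolygonalSets

variable {E : Type*} [NormedAddCommGroup E] [NormedSpace ℝ E] {a b c p : E} {A B : Set E}

/-- `IsPolygonal A` says that `A` is a finite union of segments. -/
inductive IsPolygonal : Set E → Prop
  | empty : IsPolygonal ∅
  | segment_union (a b : E) {A : Set E} : IsPolygonal A → IsPolygonal (segment ℝ a b ∪ A)

theorem isPolygonal_segment (a b : E) : IsPolygonal (segment ℝ a b) := by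
  simpa using IsPolygonal.empty.segment_union a b

namespace IsPolygonal

theorem union (hA : IsPolygonal A) (hB : IsPolygonal B) : IsPolygonal (A ∪ B) := by
  induction hA with
  | empty => simpa
  | segment_union a b _ ih => rw [union_assoc]; exact ih.segment_union a b

theorem biUnion {ι : Type*} {s : Set ι} (hs : s.Finite) {f : ι → Set E}
    (h : ∀ i ∈ s, IsPolygonal (f i)) : IsPolygonal (⋃ i ∈ s, f i) := by
  induction s, hs using Set.Finite.induction_on with
  | empty => simpa using empty
  | insert _ _ ih =>
    rw [biUnion_insert]
    exact (h _ (mem_insert _ _)).union (ih fun i hi => h i (mem_insert_of_mem _ hi))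

theorem isCompact (hA : IsPolygonal A) : IsCompact A := by
  induction hA with
  | empty => exact isCompact_empty
  | segment_union a b _ ih => exact (isCompact_segment a b).union ih

end IsPolygonal

/-- `IsPolygonalChain a b A` says that `A` is the trace of a polygonal line from `a` to `b`,
possibly with self-intersections. -/
inductive IsPolygonalChain : E → E → Set E → Prop
  | refl (a : E) : IsPolygonalChain a a {a}
  | cons {a b c : E} {A : Set E} :
      IsPolygonalChain b c A → IsPolygonalChain a c (segment ℝ a b ∪ A)

/-- `IsPolygonalArc a b A` says that `A` is the trace of a simple polygonal line from `a` to `b`.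
A single point is allowed. -/
inductive IsPolygonalArc : E → E → Set E → Prop
  | refl (a : E) : IsPolygonalArc a a {a}
  | cons {a b c : E} {A : Set E} : IsPolygonalArc b c A → a ≠ b → segment ℝ a b ∩ A ⊆ {b} →
      IsPolygonalArc a c (segment ℝ a b ∪ A)

theorem isPolygonalChain_segment (a b : E) : IsPolygonalChain a b (segment ℝ a b) := by
  have h := (IsPolygonalChain.refl b).cons (a := a)
  rwa [union_eq_left.2 (singleton_subset_iff.2 (right_mem_segment ℝ a b))] at h

namespace IsPolygonalChain

theorem left_mem (h : IsPolygonalChain a b A) : a ∈ A := by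
  cases h with
  | refl => exact mem_singleton a
  | cons => exact Or.inl (left_mem_segment ℝ _ _)

theorem trans (hA : IsPolygonalChain a b A) (hB : IsPolygonalChain b c B) :
    IsPolygonalChain a c (A ∪ B) := by
  induction hA with
  | refl b => rwa [union_eq_right.2 (singleton_subset_iff.2 hB.left_mem)]
  | cons _ ih => rw [union_assoc]; exact (ih hB).cons

theorem symm (h : IsPolygonalChain a b A) : IsPolygonalChain b a A := by
  induction h with
  | refl a => exact refl a
  | cons _ ih =>
    rw [union_comm, segment_symm]
    exact ih.trans (isPolygonalChain_segment _ _)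

theorem isPolygonal (h : IsPolygonalChain a b A) : IsPolygonal A := by
  induction h with
  | refl a => simpa using isPolygonal_segment a a
  | cons _ ih => exact ih.segment_union _ _

end IsPolygonalChain

theorem isPolygonalArc_segment (h : a ≠ b) : IsPolygonalArc a b (segment ℝ a b) := by
  have h := (IsPolygonalArc.refl b).cons (a := a) h inter_subset_right
  rwa [union_eq_left.2 (singleton_subset_iff.2 (right_mem_segment ℝ a b))] at h

namespace IsPolygonalArc

theorem left_mem (h : IsPolygonalArc a b A) : a ∈ A := by
  cases h with
  | refl => exact mem_singleton a
  | cons => exact Or.inl (left_mem_segment ℝ _ _)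

theorem right_mem (h : IsPolygonalArc a b A) : b ∈ A := by
  induction h with
  | refl a => exact mem_singleton a
  | cons _ _ _ ih => exact Or.inr ih

theorem isPolygonalChain (h : IsPolygonalArc a b A) : IsPolygonalChain a b A := by
  induction h with
  | refl a => exact .refl a
  | cons _ _ _ ih => exact ih.cons

theorem isPolygonal (h : IsPolygonalArc a b A) : IsPolygonal A := h.isPolygonalChain.isPolygonal

theorem isPreconnected (h : IsPolygonalArc a b A) : IsPreconnected A := by
  induction h with
  | refl a => exact isPreconnected_singleton
  | cons h _ _ ih =>
    exact (convex_segment _ _).isPreconnected.union _ (right_mem_segment ℝ _ _) h.left_mem ih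

theorem trans (hA : IsPolygonalArc a b A) (hB : IsPolygonalArc b c B) (hAB : A ∩ B ⊆ {b}) :
    IsPolygonalArc a c (A ∪ B) := by
  induction hA with
  | refl b => rwa [union_eq_right.2 (singleton_subset_iff.2 hB.left_mem)]
  | cons hA hne hseg ih =>
    rw [union_assoc]
    refine (ih hB fun x hx => hAB ⟨Or.inr hx.1, hx.2⟩).cons hne ?_
    rintro x ⟨hx, hxA | hxB⟩
    · exact hseg ⟨hx, hxA⟩
    · obtain rfl := hAB ⟨Or.inl hx, hxB⟩
      exact hseg ⟨hx, hA.right_mem⟩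

theorem symm (h : IsPolygonalArc a b A) : IsPolygonalArc b a A := by
  induction h with
  | refl a => exact refl a
  | cons h hne hseg ih =>
    rw [union_comm, segment_symm]
    exact ih.trans (isPolygonalArc_segment hne.symm) (by rwa [segment_symm, inter_comm])

theorem exists_subset_of_mem (h : IsPolygonalArc a b A) (hp : p ∈ A) :
    ∃ B ⊆ A, IsPolygonalArc p b B := by
  induction h with
  | refl a => exact ⟨{a}, subset_rfl, by rw [mem_singleton_iff.1 hp]; exact refl a⟩
  | @cons a b c A hA _ hseg ih =>
    by_cases hpA : p ∈ A
    · obtain ⟨B, hBA, hB⟩ := ih hpA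
      exact ⟨B, hBA.trans subset_union_right, hB⟩
    · have hsub := segment_subset_segment_right (hp.resolve_right hpA)
      exact ⟨_, union_subset_union_left A hsub, hA.cons (fun h => hpA (h ▸ hA.left_mem))
        fun x hx => hseg ⟨hsub hx.1, hx.2⟩⟩

theorem exists_eq_segment_union (h : IsPolygonalArc a c A) (hac : a ≠ c) :
    ∃ b B, a ≠ b ∧ b ≠ c ∧ IsPolygonalArc b c B ∧ segment ℝ a b ∩ B ⊆ {b} ∧
      A = segment ℝ a b ∪ B := by
  cases h with
  | refl => exact absurd rfl hac
  | @cons _ b _ B hB hab hseg =>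
    -- The far endpoint `b` of the first piece may be `c`, but its midpoint `m` is not.
    set m := midpoint ℝ a b
    have hm : m ∈ segment ℝ a b := midpoint_mem_segment a b
    have hmb : m ≠ b := fun heq => hab ((midpoint_eq_right_iff (R := ℝ)).1 heq)
    have ham : a ≠ m := fun heq => hab ((midpoint_eq_left_iff (R := ℝ)).1 heq.symm)
    have hmB : m ∉ B := fun hmB => hmb (hseg ⟨hm, hmB⟩)
    have hbm : b ∉ segment ℝ a m := fun hb => hmb
      (segment_inter_segment_subset_of_mem hm ⟨hb, right_mem_segment ℝ m b⟩).symm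
    refine ⟨m, segment ℝ m b ∪ B, ham, fun heq => hmB (heq ▸ hB.right_mem),
      hB.cons hmb fun x hx => hseg ⟨segment_subset_segment_right hm hx.1, hx.2⟩, ?_, ?_⟩
    · rintro x ⟨hx, hx' | hx'⟩
      · exact segment_inter_segment_subset_of_mem hm ⟨hx, hx'⟩
      · obtain rfl := hseg ⟨segment_subset_segment_left hm hx, hx'⟩
        exact absurd hx hbm
    · rw [← union_assoc]
      congr 1
      refine (union_subset (segment_subset_segment_left hm)
        (segment_subset_segment_right hm)).antisymm' ?_
      simpa only [segment_symm ℝ m a] using segment_subset_union_segment hm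

theorem isPreconnected_sdiff_left (h : IsPolygonalArc a c A) (hac : a ≠ c) :
    IsPreconnected (A \ {a}) := by
  obtain ⟨b, B, hab, -, hB, hseg, rfl⟩ := h.exists_eq_segment_union hac
  have haB : a ∉ B := fun ha => hab (hseg ⟨left_mem_segment ℝ a b, ha⟩)
  rw [union_sdiff_distrib, sdiff_singleton_eq_self haB]
  exact (isPreconnected_segment_sdiff_left a b).union b ⟨right_mem_segment ℝ a b, hab.symm⟩
    hB.left_mem hB.isPreconnected

end IsPolygonalArc

theorem IsPolygonalChain.exists_isPolygonalArc (h : IsPolygonalChain a b A) :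
    ∃ B ⊆ A, IsPolygonalArc a b B := by
  induction h with
  | refl a => exact ⟨{a}, subset_rfl, .refl a⟩
  | @cons a b c A _ ih =>
    obtain ⟨B, hBA, hB⟩ := ih
    obtain ⟨p, hpB, hp, hseg⟩ :=
      exists_segment_inter_subset_singleton a b hB.isPolygonal.isCompact hB.left_mem
    obtain ⟨C, hCB, hC⟩ := hB.exists_subset_of_mem hpB
    rcases eq_or_ne a p with rfl | hap
    · exact ⟨C, (hCB.trans hBA).trans subset_union_right, hC⟩
    · exact ⟨_, union_subset_union (segment_subset_segment_left hp) (hCB.trans hBA),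
        hC.cons hap fun x hx => hseg ⟨hx.1, hCB hx.2⟩⟩

end PolygonalSets

section Visibility

variable {E : Type*} [NormedAddCommGroup E] [NormedSpace ℝ E] {p b c : E} {D : Set E}

theorem eventually_disjoint_segment {A : Set E} (hA : IsClosed A)
    (h : Disjoint (segment ℝ p b) A) : ∀ᶠ s in 𝓝 p, Disjoint (segment ℝ s b) A := by
  obtain ⟨δ, hδ, hdisj⟩ := h.exists_thickenings (isCompact_segment p b) hA
  filter_upwards [Metric.ball_mem_nhds p hδ] with s hs
  refine hdisj.mono ?_ (Metric.self_subset_thickening hδ A)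
  rintro _ ⟨α, β, hα, hβ, hαβ, rfl⟩
  refine Metric.mem_thickening_iff.2 ⟨α • p + β • b, ⟨α, β, hα, hβ, hαβ, rfl⟩, ?_⟩
  rw [dist_add_right, dist_smul₀, Real.norm_of_nonneg hα]
  exact (mul_le_of_le_one_left dist_nonneg (by linarith)).trans_lt hs

theorem isClosed_setOf_sameRay (x : E) : IsClosed {w | SameRay ℝ w x} := by
  simp only [sameRay_iff_norm_smul_eq]
  exact isClosed_eq (by fun_prop) (by fun_prop)

theorem eventually_segment_inter_segment_subset (hpb : p ≠ b)
    (h : segment ℝ p b ∩ segment ℝ b c ⊆ {b}) :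
    ∀ᶠ s in 𝓝 p, segment ℝ s b ∩ segment ℝ b c ⊆ {b} := by
  rcases eq_or_ne c b with rfl | hcb
  · exact .of_forall fun s x hx => by simpa using hx.2
  rw [segment_symm, segment_inter_segment_subset_iff hpb hcb] at h
  have hopen : IsOpen {s | ¬SameRay ℝ (s - b) (c - b)} :=
    ((isClosed_setOf_sameRay (c - b)).preimage (continuous_sub_right b)).isOpen_compl
  filter_upwards [hopen.mem_nhds h, isOpen_ne.mem_nhds hpb] with s hs hsb
  rwa [segment_symm, segment_inter_segment_subset_iff hsb hcb]

theorem IsPolygonal.eventually_segment_inter_subset (hD : IsPolygonal D) (hpb : p ≠ b)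
    (h : segment ℝ p b ∩ D ⊆ {b}) : ∀ᶠ s in 𝓝 p, segment ℝ s b ∩ D ⊆ {b} := by
  induction hD with
  | empty => simp
  | segment_union c d _ ih =>
    rw [inter_union_distrib_left, union_subset_iff] at h
    simp only [inter_union_distrib_left, union_subset_iff]
    refine Eventually.and ?_ (ih h.2)
    by_cases hb : b ∈ segment ℝ c d
    · filter_upwards [
        eventually_segment_inter_segment_subset (c := c) hpb fun x hx => h.1 ⟨hx.1,
          (convex_segment c d).segment_subset hb (left_mem_segment ℝ c d) hx.2⟩,
        eventually_segment_inter_segment_subset (c := d) hpb fun x hx => h.1 ⟨hx.1,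
          (convex_segment c d).segment_subset hb (right_mem_segment ℝ c d) hx.2⟩] with s hc hd
      rintro x ⟨hxs, hx⟩
      exact (segment_subset_union_segment hb hx).elim (fun hx => hc ⟨hxs, hx⟩)
        fun hx => hd ⟨hxs, hx⟩
    · have hdisj : Disjoint (segment ℝ p b) (segment ℝ c d) :=
        disjoint_left.2 fun x hx hx' => hb (h.1 ⟨hx, hx'⟩ ▸ hx')
      filter_upwards [eventually_disjoint_segment (isCompact_segment c d).isClosed hdisj]
        with s hs
      simp [hs.inter_eq]

end Visibility

section Cones

variable {E : Type*} [AddCommGroup E] [Module ℝ E]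

/-- The cone spanned by `x` and `d`, containing the open ray through `d` but not the ray
through `x`. -/
def halfOpenCone (x d : E) : Set E :=
  {w | ∃ α β : ℝ, 0 ≤ α ∧ 0 < β ∧ w = α • x + β • d}

/-- Two vectors `x` and `y` of the plane are angularly adjacent in `N` if no vector of `N` lies
strictly between their directions on one of the two sides. The vector `d` bisects the free sector;
excluding `0` from the two cones ensures that the sector is not degenerate. -/
def AngularlyAdjacent (N : Set E) (x y : E) : Prop :=
  ∃ d, ∀ n ∈ insert 0 N, n ∉ halfOpenCone x d ∧ n ∉ halfOpenCone y d

theorem AngularlyAdjacent.symm {N : Set E} {x y : E} (h : AngularlyAdjacent N x y) :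
    AngularlyAdjacent N y x :=
  h.imp fun _ hd n hn => (hd n hn).symm

theorem segment_inter_segment_subset_of_notMem_halfOpenCone {p b d n : E} {ε : ℝ} (hε : 0 < ε)
    (h0 : 0 ∉ halfOpenCone (b - p) d) (hn : n - p ∉ halfOpenCone (b - p) d) :
    segment ℝ (p + ε • d) b ∩ segment ℝ p n ⊆ {b} := by
  rintro _ ⟨⟨α, β, hα, hβ, hαβ, rfl⟩, hx⟩
  obtain rfl : β = 1 - α := by linarith
  rw [segment_eq_image'] at hx
  obtain ⟨t, ht, hx⟩ := hx
  rcases hα.eq_or_lt with rfl | hα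
  · simp
  have key : t • (n - p) = (1 - α) • (b - p) + (α * ε) • d := by
    linear_combination (norm := module) hx
  rcases ht.1.eq_or_lt with rfl | ht
  · exact absurd ⟨1 - α, α * ε, hβ, by positivity, by rw [← key, zero_smul]⟩ h0
  · refine absurd ⟨(1 - α) / t, α * ε / t, by positivity, by positivity, ?_⟩ hn
    rw [div_eq_inv_mul, div_eq_inv_mul, mul_smul, mul_smul, ← smul_add, ← key,
      inv_smul_smul₀ ht.ne']

end Cones

theorem exists_turn {E : Type*} [NormedAddCommGroup E] [NormedSpace ℝ E]
    {D N : Set E} {p z b : E} (hD : IsPolygonal D) (hpb : p ≠ b) (hpz : p ≠ z)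
    (hb : segment ℝ p b ∩ D ⊆ {b}) (hz : segment ℝ p z ∩ D ⊆ {z}) (hbN : b ∈ N)
    (hadj : AngularlyAdjacent ((· - p) '' N) (b - p) (z - p)) :
    ∃ s, s ≠ b ∧ segment ℝ s b ∩ (D ∪ ⋃ n ∈ N, segment ℝ p n) ⊆ {b} ∧
      segment ℝ s z ∩ (D ∪ ⋃ n ∈ N, segment ℝ p n) ⊆ {z} := by
  obtain ⟨d, hd⟩ := hadj
  have htendsto : Tendsto (fun ε : ℝ => p + ε • d) (𝓝[>] 0) (𝓝 p) := by
    have h : Tendsto (fun ε : ℝ => p + ε • d) (𝓝 0) (𝓝 (p + (0 : ℝ) • d)) :=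
      Continuous.tendsto (by fun_prop) 0
    rw [zero_smul, add_zero] at h
    exact h.mono_left nhdsWithin_le_nhds
  obtain ⟨ε, ⟨hεb, hεz⟩, hε⟩ := ((htendsto.eventually
    ((hD.eventually_segment_inter_subset hpb hb).and
      (hD.eventually_segment_inter_subset hpz hz))).and self_mem_nhdsWithin).exists
  have h0 := hd 0 (mem_insert _ _)
  have hN : ∀ n ∈ N, _ := fun n hn => hd (n - p) (mem_insert_of_mem _ ⟨n, hn, rfl⟩)
  refine ⟨p + ε • d, ?_, ?_, ?_⟩
  · rintro rfl
    exact (hN _ hbN).1 ⟨0, ε, le_rfl, hε, by module⟩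
  · rw [inter_union_distrib_left, inter_iUnion₂]
    exact union_subset hεb (iUnion₂_subset fun n hn =>
      segment_inter_segment_subset_of_notMem_halfOpenCone hε h0.1 (hN n hn).1)
  · rw [inter_union_distrib_left, inter_iUnion₂]
    exact union_subset hεz (iUnion₂_subset fun n hn =>
      segment_inter_segment_subset_of_notMem_halfOpenCone hε h0.2 (hN n hn).2)

section Angles

open Complex Real

/-- The argument of a complex number, normalised to lie in `(0, 2π]`; it is `π` at `0`. -/
noncomputable def positiveArg (w : ℂ) : ℝ := Complex.arg (-w) + π

theorem positiveArg_pos (w : ℂ) : 0 < positiveArg w := by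
  rw [positiveArg]
  linarith [neg_pi_lt_arg (-w)]

theorem positiveArg_le_two_pi (w : ℂ) : positiveArg w ≤ 2 * π := by
  rw [positiveArg]
  linarith [arg_le_pi (-w)]

theorem positiveArg_mul_exp {r t : ℝ} (hr : 0 < r) (ht : t ∈ Ioc 0 (2 * π)) :
    positiveArg (r * exp (t * I)) = t := by
  have hneg : -(r * exp (t * I)) = r * exp ((t - π : ℝ) * I) := by
    rw [ofReal_sub, sub_mul, Complex.exp_sub, exp_pi_mul_I]
    ring
  rw [positiveArg, hneg, arg_real_mul _ hr, arg_exp_mul_I, (toIocMod_eq_self _).2]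
  · ring
  · constructor <;> linarith [ht.1, ht.2]

theorem norm_mul_exp_positiveArg (w : ℂ) : ‖w‖ * exp (positiveArg w * I) = w := by
  have h := norm_mul_exp_arg_mul_I (-w)
  rw [norm_neg] at h
  rw [positiveArg, ofReal_add, add_mul, Complex.exp_add, exp_pi_mul_I]
  linear_combination -h

theorem sameRay_of_positiveArg_eq {w w' : ℂ} (h : positiveArg w = positiveArg w') :
    SameRay ℝ w w' :=
  sameRay_neg_iff.1 (sameRay_of_arg_eq (add_right_cancel h))

theorem positiveArg_one : positiveArg 1 = 2 * π := by
  rw [positiveArg, arg_neg_one]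
  ring

theorem positiveArg_lt_two_pi {w : ℂ} (h : ¬SameRay ℝ w 1) : positiveArg w < 2 * π :=
  (positiveArg_le_two_pi w).lt_of_ne fun hw =>
    h (sameRay_of_positiveArg_eq (hw.trans positiveArg_one.symm))

theorem sameRay_div_right_iff {z x y : ℂ} (hz : z ≠ 0) :
    SameRay ℝ (x / z) (y / z) ↔ SameRay ℝ x y := by
  simpa only [LinearMap.mulRight_apply, div_mul_cancel₀ _ hz] using
    (Function.Injective.sameRay_map_iff
      (f := LinearMap.mulRight ℝ z) (mul_left_injective₀ hz) (x := x / z) (y := y / z)).symm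

theorem exists_add_mul_exp_eq_mul_exp {τ α β : ℝ} (hτ : τ ∈ Ioo 0 π) (hα : 0 ≤ α) (hβ : 0 < β) :
    ∃ r > 0, ∃ η ∈ Ioc 0 τ, (α + β * exp (τ * I) : ℂ) = (r : ℝ) * exp ((η : ℝ) * I) := by
  set y : ℂ := α + β * exp (τ * I) with hy
  have hsin : 0 < Real.sin τ := Real.sin_pos_of_mem_Ioo hτ
  have hre : y.re = α + β * Real.cos τ := by simp [hy, exp_ofReal_mul_I_re, exp_ofReal_mul_I_im]
  have him : y.im = β * Real.sin τ := by simp [hy, exp_ofReal_mul_I_re, exp_ofReal_mul_I_im]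
  have him_pos : 0 < y.im := him ▸ mul_pos hβ hsin
  have hy0 : 0 < ‖y‖ := norm_pos_iff.2 fun h => him_pos.ne' (by rw [h, zero_im])
  have harg : 0 < y.arg := (arg_nonneg_iff.2 him_pos.le).lt_of_ne fun h =>
    him_pos.ne (by rw [← norm_mul_sin_arg, ← h, Real.sin_zero, mul_zero])
  refine ⟨‖y‖, hy0, y.arg, ⟨harg, ?_⟩, (norm_mul_exp_arg_mul_I y).symm⟩
  have hsub : ‖y‖ * Real.sin (τ - y.arg) = α * Real.sin τ := by
    rw [Real.sin_sub]
    linear_combination Real.sin τ * (norm_mul_cos_arg y + hre) -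
      Real.cos τ * (norm_mul_sin_arg y + him)
  by_contra! hlt
  have hneg := Real.sin_neg_of_neg_of_neg_pi_lt (x := τ - y.arg) (by linarith)
    (by linarith [arg_le_pi y, hτ.1])
  nlinarith [mul_nonneg hα hsin.le]

theorem positiveArg_mem_Ioo_of_mem_halfOpenCone {s t r : ℝ} (hs : 0 ≤ s) (hst : s < t)
    (ht : t ≤ 2 * π) (hlt : t - s < 2 * π) (hr : 0 < r) {v w : ℂ}
    (hv : v = r * exp (s * I) ∨ v = r * exp (t * I))
    (hw : w ∈ halfOpenCone v (exp (((s + t) / 2 : ℝ) * I))) :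
    w ≠ 0 ∧ positiveArg w ∈ Ioo s t := by
  suffices ∃ ρ > 0, ∃ ψ ∈ Ioo s t, w = (ρ : ℝ) * exp ((ψ : ℝ) * I) by
    obtain ⟨ρ, hρ, ψ, hψ, rfl⟩ := this
    rw [positiveArg_mul_exp hρ ⟨hs.trans_lt hψ.1, hψ.2.le.trans ht⟩]
    exact ⟨mul_ne_zero (ofReal_ne_zero.2 hρ.ne') (Complex.exp_ne_zero _), hψ⟩
  have hτ : (t - s) / 2 ∈ Ioo 0 π := by constructor <;> linarith
  obtain ⟨α, β, hα, hβ, rfl⟩ := hw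
  obtain ⟨ρ, hρ, η, hη, h⟩ := exists_add_mul_exp_eq_mul_exp hτ (mul_nonneg hα hr.le) hβ
  rcases hv with rfl | rfl
  · refine ⟨ρ, hρ, s + η, ⟨by linarith [hη.1], by linarith [hη.2]⟩, ?_⟩
    have hmid : exp (((s + t) / 2 : ℝ) * I) = exp (s * I) * exp (((t - s) / 2 : ℝ) * I) := by
      rw [← Complex.exp_add]
      push_cast
      ring_nf
    rw [ofReal_add, add_mul, Complex.exp_add, hmid, real_smul, real_smul]
    push_cast at h ⊢
    linear_combination exp (s * I) * h
  · refine ⟨ρ, hρ, t - η, ⟨by linarith [hη.2], by linarith [hη.1]⟩, ?_⟩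
    have hmid : exp (((s + t) / 2 : ℝ) * I) = exp (t * I) * exp (-(((t - s) / 2 : ℝ) * I)) := by
      rw [← Complex.exp_add]
      push_cast
      ring_nf
    have hconj := congrArg (starRingEnd ℂ) h
    simp only [map_add, map_mul, conj_ofReal, ← exp_conj, conj_I, mul_neg] at hconj
    rw [ofReal_sub, sub_mul, sub_eq_add_neg, Complex.exp_add, hmid, real_smul, real_smul]
    push_cast at hconj ⊢
    linear_combination exp (t * I) * hconj

theorem mem_halfOpenCone_div {x d w z : ℂ} (h : w ∈ halfOpenCone x d) :
    w / z ∈ halfOpenCone (x / z) (d / z) := by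
  obtain ⟨α, β, hα, hβ, rfl⟩ := h
  exact ⟨α, β, hα, hβ, by rw [add_div, smul_div_assoc, smul_div_assoc]⟩

theorem angularlyAdjacent_of_positiveArg_notMem_Ioo {N : Set ℂ} {s t : ℝ} {q x y : ℂ}
    (hs : 0 ≤ s) (hst : s < t) (ht : t ≤ 2 * π) (hlt : t - s < 2 * π) (hq : q ≠ 0)
    (hx : x ≠ 0) (hy : y ≠ 0) (hxs : x / q = ‖x / q‖ * exp (s * I))
    (hyt : y / q = ‖y / q‖ * exp (t * I)) (hN : ∀ n ∈ N, positiveArg (n / q) ∉ Ioo s t) :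
    AngularlyAdjacent N x y := by
  set d := exp (((s + t) / 2 : ℝ) * I)
  have hcone (v : ℂ) (hv0 : v ≠ 0) (hv : v / q = ‖v / q‖ * exp (s * I) ∨
      v / q = ‖v / q‖ * exp (t * I)) (n : ℂ) (hn : n ∈ halfOpenCone v (d * q)) :
      n ≠ 0 ∧ positiveArg (n / q) ∈ Ioo s t := by
    have hmem := mem_halfOpenCone_div (z := q) hn
    rw [mul_div_cancel_right₀ d hq] at hmem
    refine (positiveArg_mem_Ioo_of_mem_halfOpenCone hs hst ht hlt
      (norm_pos_iff.2 (div_ne_zero hv0 hq)) hv hmem).imp_left ?_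
    rintro h rfl
    exact h (zero_div q)
  refine ⟨d * q, ?_⟩
  rintro n (rfl | hn)
  · exact ⟨fun h => (hcone x hx (.inl hxs) 0 h).1 rfl, fun h => (hcone y hy (.inr hyt) 0 h).1 rfl⟩
  · exact ⟨fun h => hN n hn (hcone x hx (.inl hxs) n h).2,
      fun h => hN n hn (hcone y hy (.inr hyt) n h).2⟩

theorem positiveArg_div_lt_two_pi {b q : ℂ} (hbq : ¬SameRay ℝ b q) :
    positiveArg (b / q) < 2 * π := by
  have hq : q ≠ 0 := fun h => hbq (h ▸ SameRay.zero_right b)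
  rw [← sameRay_div_right_iff hq, div_self hq] at hbq
  exact positiveArg_lt_two_pi hbq

theorem angularlyAdjacent_of_forall_le {N : Set ℂ} {b q : ℂ} (hbq : ¬SameRay ℝ b q)
    (hN : ∀ n ∈ N, positiveArg (b / q) ≤ positiveArg (n / q)) : AngularlyAdjacent N b q := by
  have hq : q ≠ 0 := fun h => hbq (h ▸ SameRay.zero_right b)
  have hlt := positiveArg_div_lt_two_pi hbq
  exact (angularlyAdjacent_of_positiveArg_notMem_Ioo le_rfl (positiveArg_pos _) hlt.le
    (by linarith) hq hq (fun h => hbq (by rw [h]; exact SameRay.zero_left q)) (by simp [hq])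
    (norm_mul_exp_positiveArg _).symm fun n hn h => (hN n hn).not_gt h.2).symm

theorem angularlyAdjacent_of_forall_ge {N : Set ℂ} {b q : ℂ} (hbq : ¬SameRay ℝ b q)
    (hN : ∀ n ∈ N, n ≠ q → positiveArg (n / q) ≤ positiveArg (b / q)) :
    AngularlyAdjacent N b q := by
  have hq : q ≠ 0 := fun h => hbq (h ▸ SameRay.zero_right b)
  refine angularlyAdjacent_of_positiveArg_notMem_Ioo (positiveArg_pos (b / q)).le
    (positiveArg_div_lt_two_pi hbq) le_rfl (by linarith [positiveArg_pos (b / q)]) hq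
    (fun h => hbq (by rw [h]; exact SameRay.zero_left q)) hq (norm_mul_exp_positiveArg _).symm
    (by simp [hq, exp_two_pi_mul_I]) fun n hn h => ?_
  rcases eq_or_ne n q with rfl | hnq
  · rw [div_self hq, positiveArg_one] at h
    exact h.2.false
  · exact (hN n hn hnq).not_gt h.1

theorem exists_angularlyAdjacent_pair {N : Set ℂ} (hfin : N.Finite) {q : ℂ}
    (hqN : q ∈ N) (hN : N.Pairwise fun n m => ¬SameRay ℝ n m)
    {m m' : ℂ} (hm : m ∈ N) (hm' : m' ∈ N) (hmm' : m ≠ m') (hmq : m ≠ q) (hmq' : m' ≠ q) :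
    ∃ b ∈ N, ∃ b' ∈ N, b ≠ q ∧ b' ≠ q ∧ b ≠ b' ∧
      AngularlyAdjacent N b q ∧ AngularlyAdjacent N b' q := by
  have hq (n : ℂ) (hn : n ∈ N) (hnq : n ≠ q) : ¬SameRay ℝ n q := hN hn hqN hnq
  have hq0 : q ≠ 0 := fun h => hq m hm hmq (h ▸ SameRay.zero_right m)
  have hfin' : (N \ {q}).Finite := hfin.subset sdiff_subset
  obtain ⟨b, hb, hbmin⟩ := exists_min_image (N \ {q}) (fun n => positiveArg (n / q)) hfin'
    ⟨m, hm, hmq⟩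
  obtain ⟨c, hc, hcmax⟩ := exists_max_image (N \ {q}) (fun n => positiveArg (n / q)) hfin'
    ⟨m, hm, hmq⟩
  refine ⟨b, hb.1, c, hc.1, hb.2, hc.2, ?_, ?_, ?_⟩
  · rintro rfl
    have hconst : ∀ n ∈ N \ {q}, positiveArg (n / q) = positiveArg (b / q) :=
      fun n hn => (hcmax n hn).antisymm (hbmin n hn)
    exact hN hm hm' hmm' ((sameRay_div_right_iff hq0).1 (sameRay_of_positiveArg_eq
      ((hconst m ⟨hm, hmq⟩).trans (hconst m' ⟨hm', hmq'⟩).symm)))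
  · refine angularlyAdjacent_of_forall_le (hq b hb.1 hb.2) fun n hn => ?_
    rcases eq_or_ne n q with rfl | hnq
    · rw [div_self hq0, positiveArg_one]
      exact positiveArg_le_two_pi _
    · exact hbmin n ⟨hn, hnq⟩
  · exact angularlyAdjacent_of_forall_ge (hq c hc.1 hc.2) fun n hn hnq => hcmax n ⟨hn, hnq⟩

theorem angularlyAdjacent_triple {a b s : ℂ} (hbs : ¬SameRay ℝ b s) :
    AngularlyAdjacent {a, b, s} b s := by
  have hs : s ≠ 0 := fun h => hbs (h ▸ SameRay.zero_right b)
  rcases le_total (positiveArg (b / s)) (positiveArg (a / s)) with hle | hle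
  · refine angularlyAdjacent_of_forall_le hbs ?_
    rintro n (rfl | rfl | rfl)
    exacts [hle, le_rfl, by rw [div_self hs, positiveArg_one]; exact positiveArg_le_two_pi _]
  · refine angularlyAdjacent_of_forall_ge hbs ?_
    rintro n (rfl | rfl | rfl) hn
    exacts [hle, le_rfl, absurd rfl hn]

end Angles

section Alongside

variable {p z b x : ℂ} {B D N T : Set ℂ}

theorem exists_turn_of_not_sameRay {K : Set ℂ} {s : ℂ} (a : ℂ) (hK : IsPolygonal K) (hpb : p ≠ b)
    (hps : p ≠ s) (hray : ¬SameRay ℝ (b - p) (s - p)) (hb : segment ℝ p b ∩ K ⊆ {b})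
    (hs : segment ℝ p s ∩ K ⊆ {s}) :
    ∃ s', s' ≠ b ∧ segment ℝ s' b ∩ (segment ℝ a p ∪ segment ℝ p b ∪ K) ⊆ {b} ∧
      segment ℝ s s' ∩ (segment ℝ a p ∪ segment ℝ p b ∪ K) ⊆ {s} := by
  obtain ⟨s', hs'b, hb', hs'⟩ := exists_turn (N := {a, b, s}) hK hpb hps hb hs (by simp) (by
    simpa only [image_insert_eq, image_singleton] using angularlyAdjacent_triple hray)
  have hsub : segment ℝ a p ∪ segment ℝ p b ∪ K ⊆
      K ∪ ⋃ n ∈ ({a, b, s} : Set ℂ), segment ℝ p n := by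
    rw [segment_symm ℝ a p, biUnion_insert, biUnion_insert]
    intro y
    simp only [mem_union]
    tauto
  rw [segment_symm ℝ s' s] at hs'
  exact ⟨s', hs'b, (inter_subset_inter_right _ hsub).trans hb',
    (inter_subset_inter_right _ hsub).trans hs'⟩

theorem IsPolygonalArc.exists_isPolygonalChain_alongside {A : Set ℂ} (h : IsPolygonalArc p x A) :
    ∀ {a s : ℂ} {D : Set ℂ}, IsPolygonal D → a ≠ p → s ≠ p → segment ℝ a p ∩ A ⊆ {p} →
      D ∩ A ⊆ {x} → segment ℝ s p ∩ (segment ℝ a p ∪ A ∪ D) ⊆ {p} →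
      ∃ C, IsPolygonalChain s x C ∧ C ∩ (segment ℝ a p ∪ A ∪ D) ⊆ {x} := by
  induction h with
  | refl p => exact fun _ _ _ _ _ hs => ⟨_, isPolygonalChain_segment _ p, hs⟩
  | @cons p b x B hB hpb hpbB ih =>
    intro a s D hD ha hs haA hDA hsU
    have hpB : p ∉ B := fun hp => hpb (hpbB ⟨left_mem_segment ℝ _ _, hp⟩)
    have hpD : p ∉ D := fun hp =>
      hpB (by rw [show p = x from hDA ⟨hp, .inl (left_mem_segment ℝ _ _)⟩]; exact hB.right_mem)
    have hsU' : s ∉ segment ℝ a p ∪ (segment ℝ p b ∪ B) ∪ D := fun hmem =>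
      hs (hsU ⟨left_mem_segment ℝ _ _, hmem⟩)
    rw [segment_symm ℝ s p] at hsU
    have hray : ¬SameRay ℝ (b - p) (s - p) := (segment_inter_segment_subset_iff hpb.symm hs).1
      fun y hy => hsU ⟨hy.2, .inl (.inr (.inl hy.1))⟩
    have hbD : segment ℝ p b ∩ (B ∪ D) ⊆ {b} := by
      rintro y ⟨hy, hyB | hyD⟩
      · exact hpbB ⟨hy, hyB⟩
      · obtain rfl : y = x := hDA ⟨hyD, .inl hy⟩
        exact hpbB ⟨hy, hB.right_mem⟩
    have hsD : segment ℝ p s ∩ (B ∪ D) ⊆ {s} := by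
      rintro y ⟨hy, hyBD⟩
      obtain rfl : y = p := hsU ⟨hy, hyBD.imp (.inr ∘ .inr) id⟩
      exact absurd hyBD (not_or.2 ⟨hpB, hpD⟩)
    obtain ⟨s', hs'b, hb', hs'⟩ :=
      exists_turn_of_not_sameRay a (hB.isPolygonal.union hD) hpb hs.symm hray hbD hsD
    obtain ⟨C, hC, hCU⟩ := ih (hD.union (isPolygonal_segment a p)) hpb hs'b hpbB
      (by
        rintro y ⟨hyD | hya, hyB⟩
        · exact hDA ⟨hyD, .inr hyB⟩
        · obtain rfl : y = p := haA ⟨hya, .inr hyB⟩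
          exact absurd hyB hpB)
      (fun y hy => hb' ⟨hy.1, by have := hy.2; simp only [mem_union] at this ⊢; tauto⟩)
    refine ⟨segment ℝ s s' ∪ C, hC.cons, ?_⟩
    rintro y ⟨hy | hy, hyU⟩
    · obtain rfl : y = s := hs' ⟨hy, by simp only [mem_union] at hyU ⊢; tauto⟩
      exact absurd hyU hsU'
    · exact hCU ⟨hy, by simp only [mem_union] at hyU ⊢; tauto⟩

theorem exists_isPolygonalArc_alongside (hpb : p ≠ b) (hpz : p ≠ z) (hB : IsPolygonalArc b x B)
    (hpbB : segment ℝ p b ∩ B ⊆ {b}) (hD : IsPolygonal D) (hT : IsPolygonal T) (hbN : b ∈ N)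
    (hbD : segment ℝ p b ∩ D ⊆ {b}) (hzD : segment ℝ p z ∩ D ⊆ {z}) (hBD : B ⊆ D)
    (hadj : AngularlyAdjacent ((· - p) '' N) (b - p) (z - p)) (hTB : T ∩ B ⊆ {x})
    (hTD : T ⊆ D ∪ ⋃ n ∈ N, segment ℝ p n) :
    ∃ C, IsPolygonalArc z x C ∧ C ∩ (segment ℝ p b ∪ B ∪ T) ⊆ {z, x} := by
  obtain ⟨s, hsb, hb, hz⟩ := exists_turn hD hpb hpz hbD hzD hbN hadj
  have hsub : segment ℝ p b ∪ B ∪ T ⊆ D ∪ ⋃ n ∈ N, segment ℝ p n :=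
    union_subset (union_subset (fun y hy => .inr (mem_biUnion hbN hy)) fun y hy => .inl (hBD hy))
      hTD
  obtain ⟨C, hC, hCx⟩ := hB.exists_isPolygonalChain_alongside hT hpb hsb hpbB hTB
    fun y hy => hb ⟨hy.1, hsub hy.2⟩
  obtain ⟨C', hC'C, hC'⟩ := (hC.cons (a := z)).exists_isPolygonalArc
  refine ⟨C', hC', ?_⟩
  rintro y ⟨hy, hyU⟩
  rcases hC'C hy with hy | hy
  · rw [segment_symm] at hy
    exact .inl (hz ⟨hy, hsub hyU⟩)
  · exact .inr (hCx ⟨hy, hyU⟩)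

end Alongside

section Pendant

theorem finite_setOf_add_mul_mem_segment (p c : ℂ) :
    {t : ℝ | ∃ s > (0 : ℝ), p + s * (1 + t * Complex.I) ∈ segment ℝ p c}.Finite := by
  refine (finite_singleton ((c - p).im / (c - p).re)).subset ?_
  rintro t ⟨s, hs, hmem⟩
  rw [segment_eq_image'] at hmem
  obtain ⟨r, -, hr⟩ := hmem
  have hre := congrArg Complex.re hr
  have him := congrArg Complex.im hr
  simp only [Complex.real_smul, Complex.add_re, Complex.add_im, Complex.re_ofReal_mul,
    Complex.im_ofReal_mul, Complex.one_re, Complex.one_im, Complex.I_re, Complex.I_im, mul_zero,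
    mul_one, add_zero, zero_add, add_right_inj] at hre him
  have hc : (c - p).re ≠ 0 := fun h => hs.ne (by rw [← hre, h, mul_zero])
  rw [mem_singleton_iff, eq_div_iff hc]
  have hr0 : r ≠ 0 := fun h => hs.ne (by rw [← hre, h, zero_mul])
  refine mul_left_cancel₀ hr0 ?_
  linear_combination t * hre - him

theorem IsPolygonal.finite_setOf_not_eventually_notMem {D : Set ℂ} (hD : IsPolygonal D) (p : ℂ) :
    {t : ℝ | ¬∀ᶠ s : ℝ in 𝓝[>] 0, p + s * (1 + t * Complex.I) ∉ D}.Finite := by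
  induction hD with
  | empty => simp
  | segment_union c d _ ih =>
    refine ((ih.union (finite_setOf_add_mul_mem_segment p c)).union
      (finite_setOf_add_mul_mem_segment p d)).subset fun t ht => ?_
    by_contra hnot
    simp only [mem_union, mem_ofPred_eq, not_or, not_not, not_exists, not_and] at hnot
    obtain ⟨⟨hA, hc⟩, hd⟩ := hnot
    refine ht ?_
    simp only [mem_union, not_or]
    refine Eventually.and ?_ hA
    by_cases hp : p ∈ segment ℝ c d
    · filter_upwards [self_mem_nhdsWithin] with s hs hmem
      exact (segment_subset_union_segment hp hmem).elim (hc s hs) (hd s hs)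
    · have hcont : Tendsto (fun s : ℝ => p + s * (1 + t * Complex.I)) (𝓝 0) (𝓝 p) := by
        have h : Continuous fun s : ℝ => p + s * (1 + t * Complex.I) := by fun_prop
        simpa using h.tendsto 0
      exact (hcont.mono_left nhdsWithin_le_nhds).eventually
        ((isCompact_segment c d).isClosed.isOpen_compl.mem_nhds hp)

theorem IsPolygonal.exists_segment_inter_subset {D : Set ℂ} (hD : IsPolygonal D) (p : ℂ) :
    ∃ q, q ≠ p ∧ segment ℝ p q ∩ D ⊆ {p} := by
  obtain ⟨t, ht⟩ := (hD.finite_setOf_not_eventually_notMem p).infinite_compl.nonempty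
  obtain ⟨ε, hε, h⟩ := (mem_nhdsGT_iff_exists_Ioc_subset).1 (not_not.1 ht)
  refine ⟨p + ε * (1 + t * Complex.I), fun h => ?_, ?_⟩
  · have hre : ε = 0 := by simpa using congrArg Complex.re h
    exact (ne_of_gt hε) hre
  · rintro x ⟨hx, hxD⟩
    rw [segment_eq_image'] at hx
    obtain ⟨r, hr, rfl⟩ := hx
    rcases hr.1.eq_or_lt with rfl | hr0
    · simp
    · refine absurd hxD ?_
      have := h ⟨mul_pos hr0 hε, mul_le_of_le_one_left (le_of_lt hε) hr.2⟩
      convert this using 2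
      simp
      ring

end Pendant

section Drawings

variable {V X : Type*} {P : X → X → Set X → Prop} {W W' : Set V} {E E' : Set (Sym2 V)}
  {pos : V → X} {A : Sym2 V → Set X} {a b u v w : V}

/-- The set of endpoints of a set of edges. -/
def vertexSet (E : Set (Sym2 V)) : Set V := {w | ∃ e ∈ E, w ∈ e}

/-- A drawing in `X` of the finite loopless graph with vertex set `W` and edge set `E`: the vertex
`w` is placed at `pos w` and the edge `e` is drawn as the set `A e`. The predicate `P` is the class
of arcs allowed: `P a b C` says that `C` is an admissible arc from `a` to `b`. -/
structure IsDrawing (P : X → X → Set X → Prop) (W : Set V) (E : Set (Sym2 V)) (pos : V → X)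
    (A : Sym2 V → Set X) : Prop where
  finite : E.Finite
  mem_of_mem : ∀ e ∈ E, ∀ w ∈ e, w ∈ W
  ne : ∀ u v, s(u, v) ∈ E → u ≠ v
  injOn : InjOn pos W
  arc : ∀ u v, s(u, v) ∈ E → P (pos u) (pos v) (A s(u, v))
  exists_of_mem_inter : ∀ e ∈ E, ∀ f ∈ E, e ≠ f → ∀ y ∈ A e ∩ A f, ∃ w, w ∈ e ∧ w ∈ f ∧ pos w = y
  mem_of_pos_mem : ∀ e ∈ E, ∀ w ∈ W, pos w ∈ A e → w ∈ e

theorem mem_vertexSet_left (h : s(u, v) ∈ E) : u ∈ vertexSet E := ⟨_, h, Sym2.mem_mk_left u v⟩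

theorem mem_vertexSet_right (h : s(u, v) ∈ E) : v ∈ vertexSet E := ⟨_, h, Sym2.mem_mk_right u v⟩

theorem vertexSet_mono (h : E' ⊆ E) : vertexSet E' ⊆ vertexSet E :=
  fun _ ⟨e, he, hw⟩ => ⟨e, h he, hw⟩

namespace IsDrawing

theorem mono (h : IsDrawing P W E pos A) (hE : E' ⊆ E) : IsDrawing P W E' pos A where
  finite := h.finite.subset hE
  mem_of_mem e he := h.mem_of_mem e (hE he)
  ne u v he := h.ne u v (hE he)
  injOn := h.injOn
  arc u v he := h.arc u v (hE he)
  exists_of_mem_inter e he f hf := h.exists_of_mem_inter e (hE he) f (hE hf)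
  mem_of_pos_mem e he := h.mem_of_pos_mem e (hE he)

theorem restrict (h : IsDrawing P W E pos A) (hW : W' ⊆ W) (hE : vertexSet E ⊆ W') :
    IsDrawing P W' E pos A where
  finite := h.finite
  mem_of_mem e he _ hw := hE ⟨e, he, hw⟩
  ne := h.ne
  injOn := h.injOn.mono hW
  arc := h.arc
  exists_of_mem_inter := h.exists_of_mem_inter
  mem_of_pos_mem e he w hw := h.mem_of_pos_mem e he w (hW hw)

theorem vertexSet_subset (h : IsDrawing P W E pos A) : vertexSet E ⊆ W :=
  fun _ ⟨e, he, hw⟩ => h.mem_of_mem e he _ hw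

theorem restrict_vertexSet (h : IsDrawing P W E pos A) : IsDrawing P (vertexSet E) E pos A :=
  h.restrict h.vertexSet_subset subset_rfl

theorem inter_subset_singleton (h : IsDrawing P W E pos A) {e f : Sym2 V} (he : e ∈ E) (hf : f ∈ E)
    (hx : ∀ w ∈ e, w ∈ f → w = u) : A e ∩ A f ⊆ {pos u} := by
  have hef : e ≠ f := by
    rintro rfl
    induction e with
    | _ a b => exact h.ne a b he ((hx a (by simp) (by simp)).trans (hx b (by simp) (by simp)).symm)
  intro y hy
  obtain ⟨w, hwe, hwf, rfl⟩ := h.exists_of_mem_inter e he f hf hef y hy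
  exact congrArg pos (hx w hwe hwf)

theorem inter_subset_of_ne (h : IsDrawing P W E pos A) {w' : V} (hw : s(u, w) ∈ E)
    (hw' : s(u, w') ∈ E) (hne : w ≠ w') : A s(u, w) ∩ A s(u, w') ⊆ {pos u} :=
  h.inter_subset_singleton hw hw' fun c hc hc' => by
    rcases Sym2.mem_iff.1 hc with rfl | rfl
    exacts [rfl, (Sym2.mem_iff.1 hc').resolve_right hne]

theorem inter_subset_of_notMem (h : IsDrawing P W E pos A) {f : Sym2 V} (hw : s(u, w) ∈ E)
    (hf : f ∈ E) (hu : u ∉ f) : A s(u, w) ∩ A f ⊆ {pos w} :=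
  h.inter_subset_singleton hw hf fun c hc hcf => by
    rcases Sym2.mem_iff.1 hc with rfl | rfl
    exacts [absurd hcf hu, rfl]

theorem pos_ne (h : IsDrawing P W E pos A) (hab : s(a, b) ∈ E) : pos a ≠ pos b := fun heq =>
  h.ne a b hab (h.injOn (h.vertexSet_subset (mem_vertexSet_left hab))
    (h.vertexSet_subset (mem_vertexSet_right hab)) heq)

theorem finite_neighbors (h : IsDrawing P W E pos A) (u : V) : {w | s(u, w) ∈ E}.Finite :=
  h.finite.preimage fun _ _ _ _ heq => Sym2.congr_right.1 heq

theorem insert_edge (h : IsDrawing P W E pos A) (hsymm : ∀ {x y C}, P x y C → P y x C) {C : Set X}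
    (hab : a ≠ b) (hne : s(a, b) ∉ E) (ha : a ∈ W) (hb : b ∈ W) (hC : P (pos a) (pos b) C)
    (hCE : ∀ f ∈ E, ∀ y ∈ C ∩ A f, ∃ w, w ∈ s(a, b) ∧ w ∈ f ∧ pos w = y)
    (hCW : ∀ w ∈ W, pos w ∈ C → w ∈ s(a, b)) :
    ∃ A', IsDrawing P W (insert s(a, b) E) pos A' ∧ A' s(a, b) = C ∧ EqOn A' A E := by
  classical
  set A' := Function.update A s(a, b) C
  have hA'C : A' s(a, b) = C := Function.update_self ..
  have hA'A : EqOn A' A E := fun _ hf => Function.update_of_ne (ne_of_mem_of_not_mem hf hne) ..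
  refine ⟨A', ⟨h.finite.insert _, ?_, ?_, h.injOn, ?_, ?_, ?_⟩, hA'C, hA'A⟩
  · rintro e (rfl | he) w hw
    · rcases Sym2.mem_iff.1 hw with rfl | rfl <;> assumption
    · exact h.mem_of_mem e he w hw
  · rintro u v (he | he)
    · rcases Sym2.eq_iff.1 he with ⟨rfl, rfl⟩ | ⟨rfl, rfl⟩
      exacts [hab, hab.symm]
    · exact h.ne u v he
  · rintro u v (he | he)
    · rw [he, hA'C]
      rcases Sym2.eq_iff.1 he with ⟨rfl, rfl⟩ | ⟨rfl, rfl⟩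
      exacts [hC, hsymm hC]
    · rw [hA'A he]
      exact h.arc u v he
  · rintro e (rfl | he) f (rfl | hf) hef y hy
    · exact absurd rfl hef
    · rw [hA'C, hA'A hf] at hy
      exact hCE f hf y hy
    · rw [hA'C, hA'A he, inter_comm] at hy
      obtain ⟨w, hw, hwe, rfl⟩ := hCE e he y hy
      exact ⟨w, hwe, hw, rfl⟩
    · rw [hA'A he, hA'A hf] at hy
      exact h.exists_of_mem_inter e he f hf hef y hy
  · rintro e (rfl | he) w hw hy
    · exact hCW w hw (hA'C ▸ hy)
    · exact h.mem_of_pos_mem e he w hw (hA'A he ▸ hy)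

theorem insert_vertex (h : IsDrawing P W E pos A) {ζ : V} {z : X} (hζ : ζ ∉ W)
    (hzW : z ∉ pos '' W) (hzA : ∀ f ∈ E, z ∉ A f) :
    ∃ pos', IsDrawing P (insert ζ W) E pos' A ∧ pos' ζ = z ∧ EqOn pos' pos W := by
  classical
  set pos' := Function.update pos ζ z
  have hζz : pos' ζ = z := Function.update_self ..
  have hEq : EqOn pos' pos W := fun _ hw => Function.update_of_ne (ne_of_mem_of_not_mem hw hζ) ..
  have hinj : InjOn pos' (insert ζ W) := (injOn_insert hζ).2
    ⟨h.injOn.congr hEq.symm, by rwa [hζz, hEq.image_eq]⟩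
  refine ⟨pos', ⟨h.finite, fun e he w hw => .inr (h.mem_of_mem e he w hw), h.ne, hinj, ?_, ?_, ?_⟩,
    hζz, hEq⟩
  · intro u v he
    rw [hEq (h.vertexSet_subset (mem_vertexSet_left he)),
      hEq (h.vertexSet_subset (mem_vertexSet_right he))]
    exact h.arc u v he
  · intro e he f hf hef y hy
    obtain ⟨w, hwe, hwf, rfl⟩ := h.exists_of_mem_inter e he f hf hef y hy
    exact ⟨w, hwe, hwf, hEq (h.mem_of_mem e he w hwe)⟩
  · rintro e he w (rfl | hw) hy
    · exact absurd (hζz ▸ hy) (hzA e he)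
    · exact h.mem_of_pos_mem e he w hw (hEq hw ▸ hy)

end IsDrawing

end Drawings

section PolygonalDrawings

variable {V : Type*} {W W' : Set V} {E E' : Set (Sym2 V)} {pos : V → ℂ} {A : Sym2 V → Set ℂ}
  {a b u v w z : V}

/-- A set of edges is polygonally planar if it has a drawing in the plane all of whose edges are
simple polygonal arcs. -/
def IsPolygonallyPlanar (E : Set (Sym2 V)) : Prop :=
  ∃ (W : Set V) (pos : V → ℂ) (A : Sym2 V → Set ℂ), IsDrawing IsPolygonalArc W E pos A

namespace IsDrawing

theorem pos_mem (h : IsDrawing IsPolygonalArc W E pos A) {e : Sym2 V} (he : e ∈ E) (hw : w ∈ e) :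
    pos w ∈ A e := by
  obtain ⟨x, rfl⟩ := Sym2.mem_iff_exists.1 hw
  exact (h.arc _ _ he).left_mem

theorem isPolygonal (h : IsDrawing IsPolygonalArc W E pos A) {e : Sym2 V} (he : e ∈ E) :
    IsPolygonal (A e) := by
  induction e with
  | _ x y => exact (h.arc _ _ he).isPolygonal

theorem isPolygonal_biUnion (h : IsDrawing IsPolygonalArc W E pos A) (hE : E' ⊆ E) :
    IsPolygonal (⋃ e ∈ E', A e) :=
  .biUnion (h.finite.subset hE) fun _ he => h.isPolygonal (hE he)

end IsDrawing

namespace IsPolygonallyPlanar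

theorem mono (h : IsPolygonallyPlanar E) (hE : E' ⊆ E) : IsPolygonallyPlanar E' := by
  obtain ⟨W, pos, A, h⟩ := h
  exact ⟨W, pos, A, h.mono hE⟩

theorem finite (h : IsPolygonallyPlanar E) : E.Finite := by
  obtain ⟨_, _, _, h⟩ := h
  exact h.finite

theorem ne (h : IsPolygonallyPlanar E) (huv : s(u, v) ∈ E) : u ≠ v := by
  obtain ⟨_, _, _, h⟩ := h
  exact h.ne u v huv

theorem of_insert_insert (h : IsPolygonallyPlanar (insert s(z, a) (insert s(z, b) E)))
    (hz : z ∉ vertexSet E) (hab : a ≠ b) : IsPolygonallyPlanar (insert s(a, b) E) := by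
  have hEsub : E ⊆ insert s(z, a) (insert s(z, b) E) := fun e he => .inr (.inr he)
  by_cases hE : s(a, b) ∈ E
  · rw [insert_eq_of_mem hE]
    exact h.mono hEsub
  obtain ⟨W, pos, A, h⟩ := h
  have hza : s(z, a) ∈ insert s(z, a) (insert s(z, b) E) := .inl rfl
  have hzb : s(z, b) ∈ insert s(z, a) (insert s(z, b) E) := .inr (.inl rfl)
  have hd : IsDrawing IsPolygonalArc (W \ {z}) E pos A := (h.mono hEsub).restrict sdiff_subset
    (subset_sdiff_singleton (h.mono hEsub).vertexSet_subset hz)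
  have hmem (c : V) (hc : s(z, c) ∈ insert s(z, a) (insert s(z, b) E)) : c ∈ W \ {z} :=
    ⟨h.vertexSet_subset (mem_vertexSet_right hc), (h.ne _ _ hc).symm⟩
  have hcross (c : V) (hc : s(z, c) ∈ insert s(z, a) (insert s(z, b) E)) (f : Sym2 V) (hf : f ∈ E)
      (y : ℂ) (hy : y ∈ A s(z, c)) (hyf : y ∈ A f) : c ∈ f ∧ pos c = y := by
    obtain rfl := h.inter_subset_of_notMem hc (hEsub hf) (fun hzf => hz ⟨f, hf, hzf⟩) ⟨hy, hyf⟩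
    exact ⟨hd.mem_of_pos_mem f hf c (hmem c hc) hyf, rfl⟩
  have hvert (c : V) (hc : s(z, c) ∈ insert s(z, a) (insert s(z, b) E)) (w : V) (hw : w ∈ W \ {z})
      (hy : pos w ∈ A s(z, c)) : w = c :=
    (Sym2.mem_iff.1 (h.mem_of_pos_mem _ hc w hw.1 hy)).resolve_left hw.2
  have hCE (f : Sym2 V) (hf : f ∈ E) (y : ℂ) (hy : y ∈ (A s(z, a) ∪ A s(z, b)) ∩ A f) :
      ∃ w, w ∈ s(a, b) ∧ w ∈ f ∧ pos w = y := by
    rcases hy with ⟨hy | hy, hyf⟩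
    · exact ⟨a, Sym2.mem_mk_left a b, hcross a hza f hf y hy hyf⟩
    · exact ⟨b, Sym2.mem_mk_right a b, hcross b hzb f hf y hy hyf⟩
  have hCW (w : V) (hw : w ∈ W \ {z}) (hy : pos w ∈ A s(z, a) ∪ A s(z, b)) : w ∈ s(a, b) := by
    rcases hy with hy | hy
    · exact hvert a hza w hw hy ▸ Sym2.mem_mk_left a b
    · exact hvert b hzb w hw hy ▸ Sym2.mem_mk_right a b
  obtain ⟨A', hA', -⟩ := hd.insert_edge IsPolygonalArc.symm hab hE (hmem a hza) (hmem b hzb)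
    ((h.arc _ _ hza).symm.trans (h.arc _ _ hzb) (h.inter_subset_of_ne hza hzb hab)) hCE hCW
  exact ⟨_, _, _, hA'⟩

theorem insert_pendant (h : IsPolygonallyPlanar E) (hu : u ∈ vertexSet E) (ha : a ∉ vertexSet E) :
    IsPolygonallyPlanar (insert s(u, a) E) := by
  obtain ⟨W, pos, A, h⟩ := h
  replace h := h.restrict_vertexSet
  obtain ⟨q, hq, hqE⟩ := (h.isPolygonal_biUnion subset_rfl).exists_segment_inter_subset (pos u)
  have hseg (f : Sym2 V) (hf : f ∈ E) (y : ℂ) (hy : y ∈ segment ℝ (pos u) q) (hyf : y ∈ A f) :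
      y = pos u := hqE ⟨hy, mem_biUnion hf hyf⟩
  have hqA (f : Sym2 V) (hf : f ∈ E) : q ∉ A f := fun hqf =>
    hq (hseg f hf q (right_mem_segment ℝ _ _) hqf)
  obtain ⟨pos', h', hpos'a, hpos'⟩ := h.insert_vertex (z := q) ha
    (by rintro ⟨w, ⟨e, he, hw⟩, rfl⟩; exact hqA e he (h.pos_mem he hw)) hqA
  have hCE (f : Sym2 V) (hf : f ∈ E) (y : ℂ) (hy : y ∈ segment ℝ (pos u) q ∩ A f) :
      ∃ w, w ∈ s(u, a) ∧ w ∈ f ∧ pos' w = y := by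
    obtain rfl := hseg f hf y hy.1 hy.2
    exact ⟨u, Sym2.mem_mk_left u a, h.mem_of_pos_mem f hf u hu hy.2, hpos' hu⟩
  have hCW (w : V) (hw : w ∈ insert a (vertexSet E)) (hy : pos' w ∈ segment ℝ (pos u) q) :
      w ∈ s(u, a) := by
    rcases hw with rfl | hw
    · exact Sym2.mem_mk_right u w
    · obtain ⟨e, he, hwe⟩ := id hw
      rw [hpos' hw] at hy
      rw [h.injOn hw hu (hseg e he _ hy (h.pos_mem he hwe))]
      exact Sym2.mem_mk_left u a
  obtain ⟨A', hA', -⟩ := h'.insert_edge IsPolygonalArc.symm (ne_of_mem_of_not_mem hu ha)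
    (fun hmem => ha (mem_vertexSet_right hmem)) (.inr hu) (.inl rfl)
    (by rw [hpos'a, hpos' hu]; exact isPolygonalArc_segment hq.symm) hCE hCW
  exact ⟨_, _, _, hA'⟩

end IsPolygonallyPlanar

end PolygonalDrawings

section Gadget

variable {V X : Type*} {P : X → X → Set X → Prop} {W : Set V} {E : Set (Sym2 V)} {pos : V → X}
  {A : Sym2 V → Set X} {u v w x y ζ : V}

/-- `IsSpoke p c A n B` says that the polygonal arc `A` from `p` to `c` consists of the initial
segment from `p` to `n` and the remaining arc `B` from `n` to `c`. -/
structure IsSpoke (p c : ℂ) (A : Set ℂ) (n : ℂ) (B : Set ℂ) : Prop where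
  ne : n ≠ p
  arc : IsPolygonalArc n c B
  segment_inter_subset : segment ℝ p n ∩ B ⊆ {n}
  eq_union : A = segment ℝ p n ∪ B

namespace IsSpoke

variable {p c n m : ℂ} {A A' B B' : Set ℂ}

theorem segment_subset (h : IsSpoke p c A n B) : segment ℝ p n ⊆ A :=
  h.eq_union ▸ subset_union_left

theorem subset (h : IsSpoke p c A n B) : B ⊆ A := h.eq_union ▸ subset_union_right

theorem notMem (h : IsSpoke p c A n B) : p ∉ B := fun hp =>
  h.ne (h.segment_inter_subset ⟨left_mem_segment ℝ p n, hp⟩).symm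

theorem eq_of_mem (h : IsSpoke p c A n B) (hc : c ∈ segment ℝ p n) : c = n :=
  h.segment_inter_subset ⟨hc, h.arc.right_mem⟩

theorem not_sameRay (h : IsSpoke p c A n B) {c' : ℂ} (h' : IsSpoke p c' A' m B')
    (hA : A ∩ A' ⊆ {p}) : ¬SameRay ℝ (n - p) (m - p) :=
  (segment_inter_segment_subset_iff h.ne h'.ne).1
    ((inter_subset_inter h.segment_subset h'.segment_subset).trans hA)

theorem of_segment (hn : n ≠ p) : IsSpoke p n (segment ℝ p n) n {n} where
  ne := hn
  arc := .refl n
  segment_inter_subset := inter_subset_right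
  eq_union := (union_eq_left.2 (singleton_subset_iff.2 (right_mem_segment ℝ p n))).symm

end IsSpoke

theorem IsPolygonalArc.exists_isSpoke {p c : ℂ} {A : Set ℂ} (h : IsPolygonalArc p c A)
    (hpc : p ≠ c) : ∃ n B, n ≠ c ∧ IsSpoke p c A n B := by
  obtain ⟨n, B, hpn, hnc, hB, hseg, rfl⟩ := h.exists_eq_segment_union hpc
  exact ⟨n, B, hnc, hpn.symm, hB, hseg, rfl⟩

namespace IsDrawing

theorem segment_inter_subset_of_isSpoke {pos : V → ℂ} {A : Sym2 V → Set ℂ}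
    (h : IsDrawing IsPolygonalArc (vertexSet E) E pos A)
    {n : V → ℂ} {B : V → Set ℂ}
    (hn : ∀ w, s(u, w) ∈ E → IsSpoke (pos u) (pos w) (A s(u, w)) (n w) (B w))
    (hw : s(u, w) ∈ E) :
    segment ℝ (pos u) (n w) ∩
      ((⋃ f ∈ {f ∈ E | u ∉ f}, A f) ∪ ⋃ w' ∈ {w' | s(u, w') ∈ E}, B w') ⊆ {n w} := by
  rintro y ⟨hy, hyD⟩
  simp only [mem_union, mem_iUnion₂] at hyD
  rcases hyD with ⟨f, hf, hyf⟩ | ⟨w', hw', hyB⟩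
  · obtain rfl := h.inter_subset_of_notMem hw hf.1 hf.2 ⟨(hn w hw).segment_subset hy, hyf⟩
    exact (hn w hw).eq_of_mem hy
  · rcases eq_or_ne w w' with rfl | hne
    · exact (hn w hw).segment_inter_subset ⟨hy, hyB⟩
    · obtain rfl := h.inter_subset_of_ne hw hw' hne
        ⟨(hn w hw).segment_subset hy, (hn w' hw').subset hyB⟩
      exact absurd hyB (hn w' hw').notMem

theorem biUnion_inter_subset_of_isSpoke {pos : V → ℂ} {A : Sym2 V → Set ℂ}
    (h : IsDrawing IsPolygonalArc (vertexSet E) E pos A) {n : ℂ} {B : Set ℂ}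
    (hn : IsSpoke (pos u) (pos x) (A s(u, x)) n B) (hx : s(u, x) ∈ E) :
    (⋃ f ∈ E \ {s(u, x)}, A f) ∩ B ⊆ {pos x} := by
  rintro y ⟨hyT, hyB⟩
  simp only [mem_iUnion₂] at hyT
  obtain ⟨f, ⟨hf, hfx⟩, hyf⟩ := hyT
  by_cases huf : u ∈ f
  · obtain ⟨w, rfl⟩ := Sym2.mem_iff_exists.1 huf
    obtain rfl := h.inter_subset_of_ne hf hx (fun heq => hfx (by rw [heq]; rfl))
      ⟨hyf, hn.subset hyB⟩
    exact absurd hyB hn.notMem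
  · exact h.inter_subset_of_notMem hx hf huf ⟨hn.subset hyB, hyf⟩

theorem exists_isPolygonalArc_of_isSpoke {pos : V → ℂ} {A : Sym2 V → Set ℂ}
    (h : IsDrawing IsPolygonalArc (vertexSet E) E pos A)
    {n : V → ℂ} {B : V → Set ℂ}
    (hn : ∀ w, s(u, w) ∈ E → IsSpoke (pos u) (pos w) (A s(u, w)) (n w) (B w))
    (hx : s(u, x) ∈ E) (hζ : s(u, ζ) ∈ E) (hnζ : n ζ = pos ζ)
    (hadj : AngularlyAdjacent ((· - pos u) '' (n '' {w | s(u, w) ∈ E})) (n x - pos u)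
      (pos ζ - pos u)) :
    ∃ C, IsPolygonalArc (pos ζ) (pos x) C ∧ ∀ f ∈ E, C ∩ A f ⊆ {pos ζ, pos x} := by
  set D : Set ℂ := (⋃ f ∈ {f ∈ E | u ∉ f}, A f) ∪ ⋃ w ∈ {w | s(u, w) ∈ E}, B w
  set T : Set ℂ := ⋃ f ∈ E \ {s(u, x)}, A f
  have hD : IsPolygonal D := (h.isPolygonal_biUnion (sep_subset E _)).union
    (.biUnion (h.finite_neighbors u) fun w hw => (hn w hw).arc.isPolygonal)
  have hTD : T ⊆ D ∪ ⋃ m ∈ n '' {w | s(u, w) ∈ E}, segment ℝ (pos u) m := by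
    refine iUnion₂_subset fun f hf y hy => ?_
    by_cases huf : u ∈ f
    · obtain ⟨w, rfl⟩ := Sym2.mem_iff_exists.1 huf
      rw [(hn w hf.1).eq_union] at hy
      exact hy.symm.imp (fun hy => .inr (mem_biUnion hf.1 hy))
        fun hy => mem_biUnion (mem_image_of_mem n hf.1) hy
    · exact .inl (.inl (mem_biUnion ⟨hf.1, huf⟩ hy))
  obtain ⟨C, hC, hCT⟩ := exists_isPolygonalArc_alongside (hn x hx).ne.symm (h.pos_ne hζ)
    (hn x hx).arc (hn x hx).segment_inter_subset hD (h.isPolygonal_biUnion sdiff_subset)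
    (mem_image_of_mem n hx) (h.segment_inter_subset_of_isSpoke hn hx)
    (hnζ ▸ h.segment_inter_subset_of_isSpoke hn hζ) (fun y hy => .inr (mem_biUnion hx hy)) hadj
    (h.biUnion_inter_subset_of_isSpoke (hn x hx) hx) hTD
  refine ⟨C, hC, fun f hf y hy => hCT ⟨hy.1, ?_⟩⟩
  rcases eq_or_ne f s(u, x) with rfl | hfx
  · rw [← (hn x hx).eq_union]
    exact .inl hy.2
  · exact .inr (mem_biUnion ⟨hf, hfx⟩ hy.2)

theorem insert_edge_of_isSpoke {pos : V → ℂ} {A : Sym2 V → Set ℂ}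
    (h : IsDrawing IsPolygonalArc (vertexSet E) E pos A)
    {n : V → ℂ} {B : V → Set ℂ}
    (hn : ∀ w, s(u, w) ∈ E → IsSpoke (pos u) (pos w) (A s(u, w)) (n w) (B w))
    (hx : s(u, x) ∈ E) (hζ : s(u, ζ) ∈ E) (hnζ : n ζ = pos ζ) (hζx : ζ ≠ x) (hE : s(ζ, x) ∉ E)
    (hadj : AngularlyAdjacent ((· - pos u) '' (n '' {w | s(u, w) ∈ E})) (n x - pos u)
      (pos ζ - pos u)) :
    ∃ A', IsDrawing IsPolygonalArc (vertexSet E) (insert s(ζ, x) E) pos A' ∧ EqOn A' A E := by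
  obtain ⟨C, hC, hCE⟩ := h.exists_isPolygonalArc_of_isSpoke hn hx hζ hnζ hadj
  have hζE := mem_vertexSet_right hζ
  have hxE := mem_vertexSet_right hx
  obtain ⟨A', hA', -, hEq⟩ := h.insert_edge IsPolygonalArc.symm hζx hE hζE hxE hC
    (fun f hf y hy => by
      rcases hCE f hf hy with rfl | rfl
      · exact ⟨ζ, Sym2.mem_mk_left ζ x, h.mem_of_pos_mem f hf ζ hζE hy.2, rfl⟩
      · exact ⟨x, Sym2.mem_mk_right ζ x, h.mem_of_pos_mem f hf x hxE hy.2, rfl⟩)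
    (fun w hw hwC => by
      obtain ⟨f, hf, hwf⟩ := id hw
      exact Sym2.mem_iff.2 <| (hCE f hf ⟨hwC, h.pos_mem hf hwf⟩).imp
        (h.injOn hw hζE) (h.injOn hw hxE))
  exact ⟨A', hA', hEq⟩

theorem eq_of_mem_inter_of_subset (h : IsDrawing P W E pos A) (huv : s(u, v) ∈ E) {C : Set X}
    (hC : C ⊆ A s(u, v)) (hvC : pos v ∉ C) {f : Sym2 V} (hf : f ∈ E \ {s(u, v)}) {y : X}
    (hy : y ∈ C ∩ A f) : u ∈ f ∧ pos u = y := by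
  obtain ⟨w, hw, hwf, rfl⟩ := h.exists_of_mem_inter _ huv f hf.1 (Ne.symm hf.2) y ⟨hC hy.1, hy.2⟩
  rcases Sym2.mem_iff.1 hw with rfl | rfl
  · exact ⟨hwf, rfl⟩
  · exact absurd hy.1 hvC

theorem eq_of_pos_mem_of_subset (h : IsDrawing P W E pos A) (huv : s(u, v) ∈ E) {C : Set X}
    (hC : C ⊆ A s(u, v)) (hvC : pos v ∉ C) (hw : w ∈ W) (hwC : pos w ∈ C) : w = u := by
  rcases Sym2.mem_iff.1 (h.mem_of_pos_mem _ huv w hw (hC hwC)) with rfl | rfl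
  · rfl
  · exact absurd hwC hvC

theorem insert_vertex_of_mem (h : IsDrawing P W E pos A) (huv : s(u, v) ∈ E) {z : X}
    (hz : z ∈ A s(u, v)) (hzu : z ≠ pos u) (hzv : z ≠ pos v) (hζ : ζ ∉ W) :
    ∃ pos', IsDrawing P (insert ζ W) (E \ {s(u, v)}) pos' A ∧ pos' ζ = z ∧ EqOn pos' pos W := by
  have hend (w : V) (hw : w ∈ s(u, v)) : pos w ≠ z := by
    rcases Sym2.mem_iff.1 hw with rfl | rfl
    exacts [hzu.symm, hzv.symm]
  refine (h.mono sdiff_subset).insert_vertex hζ ?_ fun f hf hzf => ?_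
  · rintro ⟨w, hw, rfl⟩
    exact hend w (h.mem_of_pos_mem _ huv w hw hz) rfl
  · obtain ⟨w, hw, _, hwz⟩ := h.exists_of_mem_inter _ huv f hf.1 (Ne.symm hf.2) z ⟨hz, hzf⟩
    exact hend w hw hwz

theorem exists_subdivision {pos : V → ℂ} {A : Sym2 V → Set ℂ}
    (h : IsDrawing IsPolygonalArc (vertexSet E) E pos A)
    (huv : s(u, v) ∈ E) (hζ : ζ ∉ vertexSet E) :
    ∃ (pos' : V → ℂ) (A' : Sym2 V → Set ℂ), IsDrawing IsPolygonalArc (insert ζ (vertexSet E))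
        (insert s(u, ζ) (insert s(ζ, v) (E \ {s(u, v)}))) pos' A' ∧
      A' s(u, ζ) = segment ℝ (pos' u) (pos' ζ) := by
  obtain ⟨z, B, hzv, hz⟩ := (h.arc u v huv).exists_isSpoke (h.pos_ne huv)
  have hu := mem_vertexSet_left huv
  have hv := mem_vertexSet_right huv
  have huζ : u ≠ ζ := ne_of_mem_of_not_mem hu hζ
  have hvu : s(v, u) ∈ E := Sym2.eq_swap ▸ huv
  have hBA : B ⊆ A s(v, u) := Sym2.eq_swap ▸ hz.subset
  have hvseg : pos v ∉ segment ℝ (pos u) z := fun hmem => hzv (hz.eq_of_mem hmem).symm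
  obtain ⟨pos', h₁, hpos'ζ, hpos'⟩ :=
    h.insert_vertex_of_mem huv (hz.subset hz.arc.left_mem) hz.ne hzv hζ
  obtain ⟨A₁, h₂, hA₁, hEq₁⟩ := h₁.insert_edge (C := B) IsPolygonalArc.symm
    (ne_of_mem_of_not_mem hv hζ).symm (fun hmem => hζ (mem_vertexSet_left hmem.1)) (.inl rfl)
    (.inr hv) (by rw [hpos'ζ, hpos' hv]; exact hz.arc)
    (fun f hf y hy => by
      obtain ⟨hvf, rfl⟩ := h.eq_of_mem_inter_of_subset hvu hBA hz.notMem (Sym2.eq_swap ▸ hf) hy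
      exact ⟨v, Sym2.mem_mk_right ζ v, hvf, hpos' hv⟩)
    (fun w hw hwB => Sym2.mem_iff.2 <| hw.imp_right fun hw =>
      h.eq_of_pos_mem_of_subset hvu hBA hz.notMem hw (hpos' hw ▸ hwB))
  obtain ⟨A₂, h₃, hA₂, -⟩ := h₂.insert_edge (C := segment ℝ (pos u) z)
    IsPolygonalArc.symm huζ
    (by
      rintro (heq | hmem)
      · exact h.ne u v huv (Sym2.congr_left.1 (heq.trans Sym2.eq_swap))
      · exact hζ (mem_vertexSet_right hmem.1))
    (.inr hu) (.inl rfl)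
    (by rw [hpos'ζ, hpos' hu]; exact isPolygonalArc_segment hz.ne.symm)
    (by
      rintro f (rfl | hf) y hy
      · exact ⟨ζ, Sym2.mem_mk_right u ζ, Sym2.mem_mk_left ζ v,
          hpos'ζ.trans (hz.segment_inter_subset (hA₁ ▸ hy)).symm⟩
      · obtain ⟨huf, rfl⟩ := h.eq_of_mem_inter_of_subset huv hz.segment_subset hvseg hf
          (hEq₁ hf ▸ hy)
        exact ⟨u, Sym2.mem_mk_left u ζ, huf, hpos' hu⟩)
    (fun w hw hwz => Sym2.mem_iff.2 <| hw.symm.imp_left fun hw =>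
      h.eq_of_pos_mem_of_subset huv hz.segment_subset hvseg hw (hpos' hw ▸ hwz))
  exact ⟨pos', A₂, h₃, by rw [hA₂, hpos'ζ, hpos' hu]⟩

theorem exists_forall_isSpoke {pos : V → ℂ} {A : Sym2 V → Set ℂ}
    (h : IsDrawing IsPolygonalArc W E pos A) (u : V) :
    ∃ (n : V → ℂ) (B : V → Set ℂ),
      ∀ w, s(u, w) ∈ E → IsSpoke (pos u) (pos w) (A s(u, w)) (n w) (B w) := by
  suffices hspoke : ∀ w, ∃ n B, s(u, w) ∈ E → IsSpoke (pos u) (pos w) (A s(u, w)) n B by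
    choose n B hn using hspoke
    exact ⟨n, B, hn⟩
  intro w
  by_cases hw : s(u, w) ∈ E
  · obtain ⟨n, B, -, hn⟩ := (h.arc u w hw).exists_isSpoke (h.pos_ne hw)
    exact ⟨n, B, fun _ => hn⟩
  · exact ⟨0, ∅, fun hw' => absurd hw' hw⟩

theorem exists_isSpoke {pos : V → ℂ} {A : Sym2 V → Set ℂ}
    (h : IsDrawing IsPolygonalArc W E pos A) (hζ : s(u, ζ) ∈ E)
    (hseg : A s(u, ζ) = segment ℝ (pos u) (pos ζ)) :
    ∃ (n : V → ℂ) (B : V → Set ℂ), n ζ = pos ζ ∧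
      ∀ w, s(u, w) ∈ E → IsSpoke (pos u) (pos w) (A s(u, w)) (n w) (B w) := by
  classical
  obtain ⟨n, B, hn⟩ := h.exists_forall_isSpoke u
  refine ⟨Function.update n ζ (pos ζ), Function.update B ζ {pos ζ}, Function.update_self .., ?_⟩
  intro w hw
  rcases eq_or_ne w ζ with rfl | hwζ
  · rw [Function.update_self, Function.update_self, hseg]
    exact .of_segment (h.pos_ne hζ).symm
  · rw [Function.update_of_ne hwζ, Function.update_of_ne hwζ]
    exact hn w hw

theorem exists_angularlyAdjacent_neighbors {pos : V → ℂ} {A : Sym2 V → Set ℂ}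
    (h : IsDrawing IsPolygonalArc W E pos A) {n : V → ℂ} {B : V → Set ℂ}
    (hn : ∀ w, s(u, w) ∈ E → IsSpoke (pos u) (pos w) (A s(u, w)) (n w) (B w))
    (hζ : s(u, ζ) ∈ E) (hx : s(u, x) ∈ E) (hy : s(u, y) ∈ E) (hxy : x ≠ y) (hxζ : x ≠ ζ)
    (hyζ : y ≠ ζ) :
    ∃ a b, s(u, a) ∈ E ∧ s(u, b) ∈ E ∧ a ≠ ζ ∧ b ≠ ζ ∧ a ≠ b ∧
      AngularlyAdjacent ((· - pos u) '' (n '' {w | s(u, w) ∈ E})) (n a - pos u) (n ζ - pos u) ∧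
      AngularlyAdjacent ((· - pos u) '' (n '' {w | s(u, w) ∈ E})) (n b - pos u) (n ζ - pos u) := by
  set d : V → ℂ := fun w => n w - pos u
  set N : Set V := {w | s(u, w) ∈ E}
  have hray : N.Pairwise fun w w' => ¬SameRay ℝ (d w) (d w') := fun w hw w' hw' hne =>
    (hn w hw).not_sameRay (hn w' hw') (h.inter_subset_of_ne hw hw' hne)
  have hd : InjOn d N := fun w hw w' hw' heq => by_contra fun hne =>
    hray hw hw' hne (heq ▸ SameRay.refl _)
  rw [image_image]
  obtain ⟨_, ⟨a, ha, rfl⟩, _, ⟨b, hb, rfl⟩, haζ, hbζ, hab, hadj, hadj'⟩ :=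
    exists_angularlyAdjacent_pair ((h.finite_neighbors u).image d) (mem_image_of_mem d hζ)
      (hd.pairwise_image.2 hray) (mem_image_of_mem d hx) (mem_image_of_mem d hy)
      (hd.ne hx hy hxy) (hd.ne hx hζ hxζ) (hd.ne hy hζ hyζ)
  exact ⟨a, b, ha, hb, ne_of_apply_ne d haζ, ne_of_apply_ne d hbζ, ne_of_apply_ne d hab, hadj,
    hadj'⟩

end IsDrawing

theorem mk_mem_subdivision_iff (huv : u ≠ v) (huζ : u ≠ ζ) (hwζ : w ≠ ζ) :
    s(u, w) ∈ insert s(u, ζ) (insert s(ζ, v) (E \ {s(u, v)})) ↔ s(u, w) ∈ E ∧ w ≠ v := by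
  simp [huv, huζ, hwζ]

theorem IsPolygonallyPlanar.exists_gadget {x₁ x₂ : V} (h : IsPolygonallyPlanar E)
    (huv : s(u, v) ∈ E) (h₁ : s(u, x₁) ∈ E) (h₂ : s(u, x₂) ∈ E) (h₁₂ : x₁ ≠ x₂) (h₁v : x₁ ≠ v)
    (h₂v : x₂ ≠ v) (hζ : ζ ∉ vertexSet E) :
    ∃ x y, x ≠ y ∧ x ≠ v ∧ y ≠ v ∧ s(u, x) ∈ E ∧ s(u, y) ∈ E ∧ IsPolygonallyPlanar
      (insert s(ζ, y) (insert s(ζ, x) (insert s(u, ζ) (insert s(ζ, v) (E \ {s(u, v)}))))) := by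
  obtain ⟨W, pos₀, A₀, h⟩ := h
  obtain ⟨pos, A, h', hseg⟩ := h.restrict_vertexSet.exists_subdivision huv hζ
  set E' : Set (Sym2 V) := insert s(u, ζ) (insert s(ζ, v) (E \ {s(u, v)}))
  have huζ : u ≠ ζ := ne_of_mem_of_not_mem (mem_vertexSet_left huv) hζ
  have hNζ (w : V) (hw : s(u, w) ∈ E) : w ≠ ζ := ne_of_mem_of_not_mem (mem_vertexSet_right hw) hζ
  have hE' (w : V) (hw : s(u, w) ∈ E) (hwv : w ≠ v) : s(u, w) ∈ E' :=
    (mk_mem_subdivision_iff (h.ne u v huv) huζ (hNζ w hw)).2 ⟨hw, hwv⟩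
  have hE (w : V) (hw : s(u, w) ∈ E') (hwζ : w ≠ ζ) : s(u, w) ∈ E ∧ w ≠ v :=
    (mk_mem_subdivision_iff (h.ne u v huv) huζ hwζ).1 hw
  have hζE' (w : V) (hw : s(u, w) ∈ E') (hwζ : w ≠ ζ) : s(ζ, w) ∉ E' := by
    obtain ⟨hwE, hwv⟩ := hE w hw hwζ
    rintro (heq | heq | hmem)
    · rw [Sym2.eq_swap (a := u)] at heq
      exact h.ne u w hwE (Sym2.congr_right.1 heq).symm
    · exact hwv (Sym2.congr_right.1 heq)
    · exact hζ (mem_vertexSet_left hmem.1)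
  have hζu : s(u, ζ) ∈ E' := .inl rfl
  obtain ⟨n, B, hnζ, hn⟩ := h'.exists_isSpoke hζu hseg
  obtain ⟨x, y, hx, hy, hxζ, hyζ, hxy, hadj, hadj'⟩ := h'.exists_angularlyAdjacent_neighbors hn hζu
    (hE' x₁ h₁ h₁v) (hE' x₂ h₂ h₂v) h₁₂ (hNζ x₁ h₁) (hNζ x₂ h₂)
  rw [hnζ] at hadj hadj'
  obtain ⟨A₁, h'', hEq⟩ := h'.restrict_vertexSet.insert_edge_of_isSpoke hn hx hζu hnζ hxζ.symm
    (hζE' x hx hxζ) hadj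
  have hN (w : V) : s(u, w) ∈ insert s(ζ, x) E' ↔ s(u, w) ∈ E' := by
    refine mem_insert_iff.trans (or_iff_right fun heq => ?_)
    rcases Sym2.eq_iff.1 heq with ⟨huζ', _⟩ | ⟨hux, _⟩
    exacts [huζ huζ', h'.ne u x hx hux]
  obtain ⟨A₂, h₂, -⟩ := h''.restrict_vertexSet.insert_edge_of_isSpoke (n := n) (B := B)
    (fun w hw => hEq ((hN w).1 hw) ▸ hn w ((hN w).1 hw)) (.inr hy) (.inr hζu) hnζ hyζ.symm
    (by
      rintro (heq | hmem)
      · exact hxy (Sym2.congr_right.1 heq).symm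
      · exact hζE' y hy hyζ hmem)
    (by simpa only [hN] using hadj')
  exact ⟨x, y, hxy, (hE x hx hxζ).2, (hE y hy hyζ).2, (hE x hx hxζ).1, (hE y hy hyζ).1, _, _, _, h₂⟩

end Gadget

section Winding

open Complex
open scoped Real ComplexOrder

variable {a b d e p r v w x z : ℂ} {K S : Set ℂ}

theorem neg_div_mem_slitPlane (h : ¬SameRay ℝ a b) : -(a / b) ∈ slitPlane := by
  rwa [mem_slitPlane_iff_not_le_zero, neg_nonpos, ← arg_eq_zero_iff_zero_le,
    ← sameRay_iff_arg_div_eq_zero]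

theorem sub_div_sub_mem_slitPlane (hz : z ∉ segment ℝ a b) : (b - z) / (a - z) ∈ slitPlane := by
  rw [← neg_sub z a, div_neg]
  exact neg_div_mem_slitPlane fun h => hz (mem_segment_iff_sameRay.2 h.symm)

theorem continuousOn_arg_sub_div_sub (a b : ℂ) :
    ContinuousOn (fun z => arg ((b - z) / (a - z))) (segment ℝ a b)ᶜ := fun z hz =>
  have ha : a - z ≠ 0 := fun h => hz (sub_eq_zero.1 h ▸ left_mem_segment ℝ a b)
  have hdiv : ContinuousAt (fun z => (b - z) / (a - z)) z :=
    ContinuousAt.div (by fun_prop) (by fun_prop) ha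
  ((continuousAt_arg (sub_div_sub_mem_slitPlane hz)).comp_of_eq hdiv rfl).continuousWithinAt

theorem coe_arg_sub_div_sub (hz : z ∉ segment ℝ a b) :
    (arg ((b - z) / (a - z)) : Real.Angle) = arg (b - z) - arg (a - z) :=
  arg_div_coe_angle (fun h => hz (sub_eq_zero.1 h ▸ right_mem_segment ℝ a b))
    (fun h => hz (sub_eq_zero.1 h ▸ left_mem_segment ℝ a b))

theorem IsPolygonalChain.exists_continuousOn_angle (h : IsPolygonalChain a b K) :
    ∃ W : ℂ → ℝ, ContinuousOn W Kᶜ ∧ ∀ z ∉ K, (W z : Real.Angle) = arg (b - z) - arg (a - z) := by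
  induction h with
  | refl a => exact ⟨0, continuousOn_const, by simp⟩
  | @cons a c b A _ ih =>
    obtain ⟨W, hW, hWA⟩ := ih
    refine ⟨fun z => arg ((c - z) / (a - z)) + W z, ?_, fun z hz => ?_⟩
    · rw [compl_union]
      exact ((continuousOn_arg_sub_div_sub a c).mono inter_subset_left).add
        (hW.mono inter_subset_right)
    · rw [mem_union, not_or] at hz
      rw [Real.Angle.coe_add, coe_arg_sub_div_sub hz.1, hWA z hz.2]
      abel

theorem eq_of_coe_angle_eq_zero {F : ℂ → ℝ} (hS : IsPreconnected S)
    (hF : ContinuousOn F S) (h0 : ∀ z ∈ S, (F z : Real.Angle) = 0) {y : ℂ} (hx : x ∈ S)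
    (hy : y ∈ S) : F x = F y := by
  have hdisc : IsDiscrete (AddSubgroup.zmultiples (2 * π) : Set ℝ) :=
    ⟨inferInstanceAs (DiscreteTopology (AddSubgroup.zmultiples (2 * π)))⟩
  exact hS.constant_of_mapsTo hdisc hF
    (fun z hz => (QuotientAddGroup.eq_zero_iff (F z)).1 (h0 z hz)) hx hy

theorem tendsto_arg_sub_div_sub (h : ¬SameRay ℝ (p - x) d) :
    Tendsto (fun ε : ℝ => arg ((p - (x + ε • d)) / (x - (x + ε • d)))) (𝓝[>] 0)
      (𝓝 (arg (-((p - x) / d)))) := by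
  have hcont : ContinuousAt (fun ε : ℝ => -((p - (x + ε • d)) / d)) 0 := by fun_prop
  have hlim : Tendsto (fun ε : ℝ => -((p - (x + ε • d)) / d)) (𝓝[>] 0) (𝓝 (-((p - x) / d))) := by
    simpa using hcont.tendsto.mono_left nhdsWithin_le_nhds
  refine ((continuousAt_arg (neg_div_mem_slitPlane h)).tendsto.comp hlim).congr' ?_
  filter_upwards [self_mem_nhdsWithin] with ε (hε : 0 < ε)
  have hscale : (p - (x + ε • d)) / (x - (x + ε • d)) =
      (ε⁻¹ : ℝ) * -((p - (x + ε • d)) / d) := by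
    rw [sub_add_cancel_left, real_smul, div_neg, mul_comm (ε : ℂ) d, ← div_div, ofReal_inv]
    ring
  rw [Function.comp_apply, hscale, arg_real_mul _ (inv_pos.2 hε)]

-- The closed curve `x → p → K → r → x` has a continuous integral winding number on `S`, which
-- therefore has the same limit at `x` along the rays of directions `d` and `e`.
theorem IsPolygonalChain.positiveArg_sub_eq (hK : IsPolygonalChain p r K) (hxK : x ∉ K)
    (hS : IsPreconnected S) (hdisj : Disjoint S (segment ℝ x p ∪ K ∪ segment ℝ x r))
    (hpd : ¬SameRay ℝ (p - x) d) (hpe : ¬SameRay ℝ (p - x) e)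
    (hrd : ¬SameRay ℝ (r - x) d) (hre : ¬SameRay ℝ (r - x) e)
    (hdS : ∀ᶠ ε : ℝ in 𝓝[>] 0, x + ε • d ∈ S) (heS : ∀ᶠ ε : ℝ in 𝓝[>] 0, x + ε • e ∈ S) :
    positiveArg ((p - x) / d) - positiveArg ((r - x) / d) =
      positiveArg ((p - x) / e) - positiveArg ((r - x) / e) := by
  obtain ⟨W, hW, hWK⟩ := hK.exists_continuousOn_angle
  rw [← subset_compl_iff_disjoint_right, compl_union, compl_union, subset_inter_iff,
    subset_inter_iff] at hdisj
  obtain ⟨⟨hSp, hSK⟩, hSr⟩ := hdisj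
  set F : ℂ → ℝ := fun z => arg ((p - z) / (x - z)) + W z - arg ((r - z) / (x - z))
  have hFcont : ContinuousOn F S :=
    (((continuousOn_arg_sub_div_sub x p).mono hSp).add (hW.mono hSK)).sub
      ((continuousOn_arg_sub_div_sub x r).mono hSr)
  have hF0 (z) (hz : z ∈ S) : (F z : Real.Angle) = 0 := by
    rw [Real.Angle.coe_sub, Real.Angle.coe_add, coe_arg_sub_div_sub (hSp hz), hWK z (hSK hz),
      coe_arg_sub_div_sub (hSr hz)]
    abel
  have hlim {d : ℂ} (hpd : ¬SameRay ℝ (p - x) d) (hrd : ¬SameRay ℝ (r - x) d) :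
      Tendsto (fun ε : ℝ => F (x + ε • d)) (𝓝[>] 0)
        (𝓝 (arg (-((p - x) / d)) + W x - arg (-((r - x) / d)))) := by
    have hline : ContinuousAt (fun ε : ℝ => x + ε • d) 0 := by fun_prop
    have hWx : ContinuousAt W x :=
      hW.continuousAt (hK.isPolygonal.isCompact.isClosed.isOpen_compl.mem_nhds hxK)
    have hWline : Tendsto (fun ε : ℝ => W (x + ε • d)) (𝓝[>] 0) (𝓝 (W x)) :=
      (ContinuousAt.comp_of_eq hWx hline (by simp)).tendsto.mono_left nhdsWithin_le_nhds
        |>.trans_eq (by simp)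
    exact ((tendsto_arg_sub_div_sub hpd).add hWline).sub (tendsto_arg_sub_div_sub hrd)
  have heq : (fun ε : ℝ => F (x + ε • d)) =ᶠ[𝓝[>] 0] fun ε : ℝ => F (x + ε • e) := by
    filter_upwards [hdS, heS] with ε hd he using eq_of_coe_angle_eq_zero hS hFcont hF0 hd he
  have := tendsto_nhds_unique ((hlim hpd hrd).congr' heq) (hlim hpe hre)
  simp only [positiveArg]
  linarith

theorem norm_div_norm_mul_exp_positiveArg_sub (w v : ℂ) :
    (‖w‖ / ‖v‖ : ℝ) * exp ((positiveArg w - positiveArg v : ℝ) * I) = w / v := by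
  conv_rhs => rw [← norm_mul_exp_positiveArg w, ← norm_mul_exp_positiveArg v]
  rw [ofReal_sub, sub_mul, Complex.exp_sub, ofReal_div]
  ring

theorem positiveArg_div_of_lt (hw : w ≠ 0) (hv : v ≠ 0) (h : positiveArg v < positiveArg w) :
    positiveArg (w / v) = positiveArg w - positiveArg v := by
  rw [← norm_div_norm_mul_exp_positiveArg_sub]
  exact positiveArg_mul_exp (by positivity)
    ⟨sub_pos.2 h, by linarith [positiveArg_le_two_pi w, positiveArg_pos v]⟩

theorem positiveArg_div_of_ge (hw : w ≠ 0) (hv : v ≠ 0) (h : positiveArg w ≤ positiveArg v) :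
    positiveArg (w / v) = positiveArg w - positiveArg v + 2 * π := by
  have hperiod : exp ((positiveArg w - positiveArg v : ℝ) * I) =
      exp ((positiveArg w - positiveArg v + 2 * π : ℝ) * I) := by
    push_cast
    rw [add_mul, exp_periodic]
  rw [← norm_div_norm_mul_exp_positiveArg_sub, hperiod]
  exact positiveArg_mul_exp (by positivity)
    ⟨by linarith [positiveArg_pos w, positiveArg_le_two_pi v], by linarith⟩

theorem positiveArg_sub_ne_of_lt_of_lt (hp : p ≠ 0) (hr : r ≠ 0) (hd : d ≠ 0) (he : e ≠ 0)
    (hpd : ¬SameRay ℝ d p) (hpe : ¬SameRay ℝ e p) (hdr : positiveArg (d / p) < positiveArg (r / p))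
    (hre : positiveArg (r / p) < positiveArg (e / p)) :
    positiveArg (p / d) - positiveArg (r / d) ≠ positiveArg (p / e) - positiveArg (r / e) := by
  have hswap {c : ℂ} (hc : c ≠ 0) (hpc : ¬SameRay ℝ c p) :
      positiveArg (p / c) = 2 * π - positiveArg (c / p) := by
    rw [← one_div_div, ← positiveArg_one]
    exact positiveArg_div_of_lt one_ne_zero (div_ne_zero hc hp)
      (positiveArg_one.symm ▸ positiveArg_div_lt_two_pi hpc)
  have hrd := positiveArg_div_of_lt (div_ne_zero hr hp) (div_ne_zero hd hp) hdr
  have hre := positiveArg_div_of_ge (div_ne_zero hr hp) (div_ne_zero he hp) hre.le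
  rw [div_div_div_cancel_right₀ hp] at hrd hre
  rw [hswap hd hpd, hswap he hpe, hrd, hre]
  linarith [Real.pi_pos]

end Winding

section CompleteGraph

open Complex

variable {V : Type*} {W : Set V} {E : Set (Sym2 V)} {pos : V → ℂ} {A : Sym2 V → Set ℂ}
  {x p q r s : V}

theorem IsSpoke.eventually_mem {p c n : ℂ} {A B : Set ℂ} (h : IsSpoke p c A n B) :
    ∀ᶠ ε : ℝ in 𝓝[>] 0, p + ε • (n - p) ∈ A \ {p} := by
  filter_upwards [Ioc_mem_nhdsGT one_pos] with ε hε
  refine ⟨h.segment_subset (segment_eq_image' ℝ p n ▸ ⟨ε, ⟨hε.1.le, hε.2⟩, rfl⟩), ?_⟩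
  simp [hε.1.ne', sub_ne_zero.2 h.ne]

namespace IsDrawing

theorem pos_notMem (h : IsDrawing IsPolygonalArc W E pos A) (hxW : x ∈ W) {e : Sym2 V} (he : e ∈ E)
    (hxe : x ∉ e) : pos x ∉ A e := fun hx => hxe (h.mem_of_pos_mem e he x hxW hx)

theorem isPreconnected_triangle_sdiff (h : IsDrawing IsPolygonalArc W E pos A) (hxq : s(x, q) ∈ E)
    (hqs : s(q, s) ∈ E) (hxs : s(x, s) ∈ E) :
    IsPreconnected ((A s(x, q) \ {pos x}) ∪ A s(q, s) ∪ (A s(x, s) \ {pos x})) := by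
  have hpre {w : V} (hxw : s(x, w) ∈ E) : IsPreconnected (A s(x, w) \ {pos x}) :=
    (h.arc x w hxw).isPreconnected_sdiff_left (h.pos_ne hxw)
  have hmem {w : V} (hxw : s(x, w) ∈ E) : pos w ∈ A s(x, w) \ {pos x} :=
    ⟨(h.arc x w hxw).right_mem, (h.pos_ne hxw).symm⟩
  have harc := h.arc q s hqs
  exact ((hpre hxq).union (pos q) (hmem hxq) harc.left_mem harc.isPreconnected).union (pos s)
    (.inr harc.right_mem) (hmem hxs) (hpre hxs)

theorem disjoint_triangle_sdiff (h : IsDrawing IsPolygonalArc W E pos A)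
    (hxp : s(x, p) ∈ E) (hpr : s(p, r) ∈ E) (hxr : s(x, r) ∈ E)
    (hxq : s(x, q) ∈ E) (hqs : s(q, s) ∈ E) (hxs : s(x, s) ∈ E)
    (hpq : p ≠ q) (hps : p ≠ s) (hrq : r ≠ q) (hrs : r ≠ s) :
    Disjoint ((A s(x, q) \ {pos x}) ∪ A s(q, s) ∪ (A s(x, s) \ {pos x}))
      (A s(x, p) ∪ A s(p, r) ∪ A s(x, r)) := by
  have hcommon (e) (he : e = s(x, q) ∨ e = s(q, s) ∨ e = s(x, s))
      (f) (hf : f = s(x, p) ∨ f = s(p, r) ∨ f = s(x, r)) : A e ∩ A f ⊆ {pos x} := by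
    refine h.inter_subset_singleton (by rcases he with rfl | rfl | rfl <;> assumption)
      (by rcases hf with rfl | rfl | rfl <;> assumption) fun w hwe hwf => ?_
    have hwe' : w = x ∨ w = q ∨ w = s := by rcases he with rfl | rfl | rfl <;> grind
    have hwf' : w = x ∨ w = p ∨ w = r := by rcases hf with rfl | rfl | rfl <;> grind
    grind
  have hx : pos x ∉ A s(q, s) :=
    h.pos_notMem (h.vertexSet_subset (mem_vertexSet_left hxq)) hqs
      (by simp [h.ne x q hxq, h.ne x s hxs])
  have hqs' : A s(q, s) ⊆ A s(q, s) \ {pos x} := subset_sdiff_singleton subset_rfl hx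
  rw [Set.disjoint_left]
  rintro y hy hy'
  obtain ⟨e, he, hye⟩ : ∃ e, (e = s(x, q) ∨ e = s(q, s) ∨ e = s(x, s)) ∧ y ∈ A e \ {pos x} := by
    rcases hy with (hy | hy) | hy
    exacts [⟨_, .inl rfl, hy⟩, ⟨_, .inr (.inl rfl), hqs' hy⟩, ⟨_, .inr (.inr rfl), hy⟩]
  obtain ⟨f, hf, hyf⟩ : ∃ f, (f = s(x, p) ∨ f = s(p, r) ∨ f = s(x, r)) ∧ y ∈ A f := by
    rcases hy' with (hy | hy) | hy
    exacts [⟨_, .inl rfl, hy⟩, ⟨_, .inr (.inl rfl), hy⟩, ⟨_, .inr (.inr rfl), hy⟩]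
  exact hye.2 (hcommon e he f hf ⟨hye.1, hyf⟩)

-- Two triangles sharing only the vertex `x` cannot cross at `x`.
theorem not_positiveArg_lt_lt (h : IsDrawing IsPolygonalArc W E pos A)
    (hxp : s(x, p) ∈ E) (hpr : s(p, r) ∈ E) (hxr : s(x, r) ∈ E)
    (hxq : s(x, q) ∈ E) (hqs : s(q, s) ∈ E) (hxs : s(x, s) ∈ E)
    (hpq : p ≠ q) (hps : p ≠ s) (hrq : r ≠ q) (hrs : r ≠ s) {n : V → ℂ} {B : V → Set ℂ}
    (hn : ∀ w, s(x, w) ∈ E → IsSpoke (pos x) (pos w) (A s(x, w)) (n w) (B w))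
    (hqr : positiveArg ((n q - pos x) / (n p - pos x)) <
      positiveArg ((n r - pos x) / (n p - pos x))) :
    ¬positiveArg ((n r - pos x) / (n p - pos x)) <
      positiveArg ((n s - pos x) / (n p - pos x)) := by
  intro hrs'
  have h0 {w : V} (hw : s(x, w) ∈ E) : n w - pos x ≠ 0 := sub_ne_zero.2 (hn w hw).ne
  have hray {w w' : V} (hw : s(x, w) ∈ E) (hw' : s(x, w') ∈ E) (hne : w ≠ w') :
      ¬SameRay ℝ (n w - pos x) (n w' - pos x) :=
    (hn w hw).not_sameRay (hn w' hw') (h.inter_subset_of_ne hw hw' hne)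
  have hK : IsPolygonalChain (n p) (n r) (B p ∪ (A s(p, r) ∪ B r)) :=
    (hn p hxp).arc.isPolygonalChain.trans
      ((h.arc p r hpr).isPolygonalChain.trans (hn r hxr).arc.isPolygonalChain.symm)
  have hxK : pos x ∉ B p ∪ (A s(p, r) ∪ B r) := by
    have hx := h.pos_notMem (x := x) (h.vertexSet_subset (mem_vertexSet_left hxp)) hpr
      (by simp [h.ne x p hxp, h.ne x r hxr])
    simp [(hn p hxp).notMem, (hn r hxr).notMem, hx]
  have hsub : segment ℝ (pos x) (n p) ∪ (B p ∪ (A s(p, r) ∪ B r)) ∪ segment ℝ (pos x) (n r) ⊆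
      A s(x, p) ∪ A s(p, r) ∪ A s(x, r) := by
    rw [(hn p hxp).eq_union, (hn r hxr).eq_union]
    grind
  refine positiveArg_sub_ne_of_lt_of_lt (h0 hxp) (h0 hxr) (h0 hxq) (h0 hxs)
    (hray hxq hxp hpq.symm) (hray hxs hxp hps.symm) hqr hrs' ?_
  refine hK.positiveArg_sub_eq hxK (h.isPreconnected_triangle_sdiff hxq hqs hxs)
    ((h.disjoint_triangle_sdiff hxp hpr hxr hxq hqs hxs hpq hps hrq hrs).mono_right hsub)
    (hray hxp hxq hpq) (hray hxp hxs hps) (hray hxr hxq hrq) (hray hxr hxs hrs)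
    ((hn q hxq).eventually_mem.mono fun ε hε => .inl (.inl hε))
    ((hn s hxs).eventually_mem.mono fun ε hε => .inr hε)

end IsDrawing

theorem exists_lt_lt_of_injOn_of_two_lt_card {α β : Type*} [LinearOrder β] {T : Finset α}
    {f : α → β} (hf : InjOn f T) (hT : 2 < T.card) :
    ∃ a ∈ T, ∃ b ∈ T, ∃ c ∈ T, f a < f b ∧ f b < f c := by
  classical
  have hne : T.Nonempty := Finset.card_pos.1 (by omega)
  obtain ⟨a, ha, hmin⟩ := T.exists_min_image f hne
  obtain ⟨c, hc, hmax⟩ := T.exists_max_image f hne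
  obtain ⟨b, hb, hbac⟩ := Finset.exists_mem_notMem_of_card_lt_card
    ((Finset.card_le_two (a := a) (b := c)).trans_lt hT)
  simp only [Finset.mem_insert, Finset.mem_singleton, not_or] at hbac
  exact ⟨a, ha, b, hb, c, hc, (hmin b hb).lt_of_ne fun h => hbac.1 (hf hb ha h.symm),
    (hmax b hb).lt_of_ne fun h => hbac.2 (hf hb hc h)⟩

theorem not_isPolygonallyPlanar_of_card_eq_five {S : Finset V} (hcard : S.card = 5)
    (hS : (S : Set V).Pairwise fun u v => s(u, v) ∈ E) : ¬IsPolygonallyPlanar E := by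
  classical
  rintro ⟨W, pos, A, h⟩
  obtain ⟨x, hx⟩ : S.Nonempty := Finset.card_pos.1 (by omega)
  have hcard₁ : (S.erase x).card = 4 := by rw [Finset.card_erase_of_mem hx, hcard]
  obtain ⟨p, hp⟩ : (S.erase x).Nonempty := Finset.card_pos.1 (by omega)
  have hcard₂ : ((S.erase x).erase p).card = 3 := by rw [Finset.card_erase_of_mem hp, hcard₁]
  obtain ⟨n, B, hn⟩ := h.exists_forall_isSpoke x
  have hxp : s(x, p) ∈ E := hS hx (Finset.mem_of_mem_erase hp) (Finset.ne_of_mem_erase hp).symm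
  have hedge {w : V} (hw : w ∈ (S.erase x).erase p) : s(x, w) ∈ E :=
    hS hx (by simp_all) (by grind)
  have hinj : InjOn (fun w => positiveArg ((n w - pos x) / (n p - pos x)))
      ((S.erase x).erase p) := fun w hw w' hw' heq => by
    by_contra hne
    exact (hn w (hedge hw)).not_sameRay (hn w' (hedge hw'))
      (h.inter_subset_of_ne (hedge hw) (hedge hw') hne)
      ((sameRay_div_right_iff (sub_ne_zero.2 (hn p hxp).ne)).1 (sameRay_of_positiveArg_eq heq))
  obtain ⟨q, hq, r, hr, s, hs, hqr, hrs⟩ := exists_lt_lt_of_injOn_of_two_lt_card hinj (by omega)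
  have hne {a b : V} (hab : positiveArg ((n a - pos x) / (n p - pos x)) <
      positiveArg ((n b - pos x) / (n p - pos x))) : a ≠ b := fun heq => by simp [heq] at hab
  simp only [Finset.mem_erase] at hp hq hr hs
  exact h.not_positiveArg_lt_lt hxp (hS hp.2 hr.2.2 hr.1.symm) (hedge (by grind))
    (hedge (by grind)) (hS hq.2.2 hs.2.2 (hne (hqr.trans hrs))) (hedge (by grind))
    hq.1.symm hs.1.symm (hne hqr).symm (hne hrs) hn hqr hrs

end CompleteGraph

section Extension

variable {V : Type*} {E F : Set (Sym2 V)} {u v x₁ x₂ ζ : V}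

theorem finite_vertexSet (hE : E.Finite) : (vertexSet E).Finite := by
  have hunion : vertexSet E = ⋃ e ∈ E, {w | w ∈ e} := by ext; simp [vertexSet]
  rw [hunion]
  refine hE.biUnion fun e _ => ?_
  induction e with
  | _ a b => exact (toFinite {a, b}).subset fun w hw => Sym2.mem_iff.1 hw

theorem finite_setOf_forall_mem_sym2 {X : Set V} (hX : X.Finite) :
    {e : Sym2 V | ∀ w ∈ e, w ∈ X}.Finite := by
  refine ((hX.prod hX).image fun q => s(q.1, q.2)).subset fun e he => ?_
  induction e with
  | _ a b => exact ⟨(a, b), ⟨he a (Sym2.mem_mk_left a b), he b (Sym2.mem_mk_right a b)⟩, rfl⟩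

theorem exists_superset_forall_insert_mem {α : Type*} {P : Set α → Prop} {S T : Set α}
    (hT : T.Finite) (hST : S ⊆ T) (hS : P S) :
    ∃ M, S ⊆ M ∧ M ⊆ T ∧ P M ∧ ∀ t ∈ T, P (insert t M) → t ∈ M := by
  obtain ⟨M, hSM, hM⟩ :=
    (hT.finite_subsets.subset fun M (hM : M ⊆ T ∧ P M) => hM.1).exists_le_maximal ⟨hST, hS⟩
  exact ⟨M, hSM, hM.prop.1, hM.prop.2, fun t ht hP =>
    hM.le_of_ge ⟨insert_subset ht hM.prop.1, hP⟩ (subset_insert t M) (mem_insert t M)⟩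

/-- `IsSaturatedExcept F u v` says that no edge other than `uv` can be added to `F` between
vertices of `F + uv` without destroying polygonal planarity. -/
def IsSaturatedExcept (F : Set (Sym2 V)) (u v : V) : Prop :=
  ∀ a ∈ vertexSet (insert s(u, v) F), ∀ b ∈ vertexSet (insert s(u, v) F), s(a, b) ≠ s(u, v) →
    IsPolygonallyPlanar (insert s(a, b) F) → s(a, b) ∈ F

theorem IsSaturatedExcept.mem_of_common_neighbor (hF : IsSaturatedExcept F u v)
    (hE : IsPolygonallyPlanar E) (hFE : F ⊆ E) (hζ : ζ ∉ vertexSet F) {a b : V}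
    (ha : a ∈ vertexSet (insert s(u, v) F)) (hb : b ∈ vertexSet (insert s(u, v) F)) (hab : a ≠ b)
    (hne : s(a, b) ≠ s(u, v)) (hζa : s(ζ, a) ∈ E) (hζb : s(ζ, b) ∈ E) : s(a, b) ∈ F :=
  hF a ha b hb hne
    ((hE.mono (insert_subset hζa (insert_subset hζb hFE))).of_insert_insert hζ hab)

theorem symm_mk_mem (E : Set (Sym2 V)) : Std.Symm fun a b => s(a, b) ∈ E :=
  ⟨fun a _ hab => Sym2.eq_swap (a := a) ▸ hab⟩

namespace IsPolygonallyPlanar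

theorem exists_notMem_insert_pendant [Infinite V] (h : IsPolygonallyPlanar E)
    (hu : u ∈ vertexSet E) : ∃ a ∉ vertexSet E, IsPolygonallyPlanar (insert s(u, a) E) := by
  obtain ⟨a, ha⟩ := (finite_vertexSet h.finite).exists_notMem
  exact ⟨a, ha, h.insert_pendant hu ha⟩

theorem exists_superset_two_neighbors [Infinite V] (h : IsPolygonallyPlanar (insert s(u, v) E))
    (huv : s(u, v) ∉ E) :
    ∃ F x₁ x₂, E ⊆ F ∧ s(u, v) ∉ F ∧ s(u, x₁) ∈ F ∧ s(u, x₂) ∈ F ∧ x₁ ≠ x₂ ∧ x₁ ≠ v ∧ x₂ ≠ v ∧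
      IsPolygonallyPlanar (insert s(u, v) F) := by
  obtain ⟨x₁, hx₁, h₁⟩ := h.exists_notMem_insert_pendant (mem_vertexSet_left (mem_insert _ _))
  obtain ⟨x₂, hx₂, h₂⟩ := h₁.exists_notMem_insert_pendant (mem_vertexSet_left (mem_insert _ _))
  have h₁v : x₁ ≠ v := fun heq => hx₁ (heq ▸ mem_vertexSet_right (mem_insert _ _))
  have h₂v : x₂ ≠ v := fun heq =>
    hx₂ (heq ▸ mem_vertexSet_right (mem_insert_of_mem _ (mem_insert _ _)))
  have h₁₂ : x₁ ≠ x₂ := fun heq => hx₂ (heq ▸ mem_vertexSet_right (mem_insert _ _))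
  refine ⟨insert s(u, x₂) (insert s(u, x₁) E), x₁, x₂, fun e he => .inr (.inr he), ?_,
    .inr (.inl rfl), .inl rfl, h₁₂, h₁v, h₂v, ?_⟩
  · rintro (heq | heq | hE)
    exacts [h₂v (Sym2.congr_right.1 heq).symm, h₁v (Sym2.congr_right.1 heq).symm, huv hE]
  · rwa [insert_comm, insert_comm s(u, v)]

theorem exists_superset_isSaturatedExcept (h : IsPolygonallyPlanar E) (huv : s(u, v) ∉ E) :
    ∃ F, E ⊆ F ∧ s(u, v) ∉ F ∧ IsPolygonallyPlanar F ∧ IsSaturatedExcept F u v := by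
  set X := vertexSet (insert s(u, v) E)
  have hX : X.Finite := finite_vertexSet (h.finite.insert _)
  obtain ⟨F, hEF, hFT, hF, hmax⟩ := exists_superset_forall_insert_mem
    (T := {e | ∀ w ∈ e, w ∈ X} \ {s(u, v)}) ((finite_setOf_forall_mem_sym2 hX).subset sdiff_subset)
    (fun e he => ⟨fun w hw => ⟨e, .inr he, hw⟩, ne_of_mem_of_not_mem he huv⟩) h
  have hFX : vertexSet (insert s(u, v) F) ⊆ X := by
    rintro w ⟨e, rfl | he, hw⟩
    exacts [⟨_, .inl rfl, hw⟩, (hFT he).1 w hw]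
  refine ⟨F, hEF, fun huvF => (hFT huvF).2 rfl, hF, fun a ha b hb hab =>
    hmax _ ⟨fun w hw => ?_, hab⟩⟩
  rcases Sym2.mem_iff.1 hw with rfl | rfl
  exacts [hFX ha, hFX hb]

theorem exists_superset_not_insert_of_isSaturatedExcept [Infinite V]
    (h : IsPolygonallyPlanar (insert s(u, v) F)) (huv : s(u, v) ∉ F) (hF : IsSaturatedExcept F u v)
    (h₁ : s(u, x₁) ∈ F) (h₂ : s(u, x₂) ∈ F) (h₁₂ : x₁ ≠ x₂) (h₁v : x₁ ≠ v) (h₂v : x₂ ≠ v) :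
    ∃ F', F ⊆ F' ∧ IsPolygonallyPlanar F' ∧ ¬IsPolygonallyPlanar (insert s(u, v) F') := by
  classical
  obtain ⟨ζ, hζ⟩ := (finite_vertexSet h.finite).exists_notMem
  have hζF : ζ ∉ vertexSet F := fun hmem => hζ (vertexSet_mono (subset_insert _ F) hmem)
  have hζne {w : V} (hw : w ∈ vertexSet (insert s(u, v) F)) : w ≠ ζ := ne_of_mem_of_not_mem hw hζ
  obtain ⟨x, y, hxy, hxv, hyv, hux, huy, hF'⟩ :=
    h.exists_gadget (.inl rfl) (.inr h₁) (.inr h₂) h₁₂ h₁v h₂v hζ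
  rw [insert_sdiff_self_of_notMem huv] at hF'
  set F' := insert s(ζ, y) (insert s(ζ, x) (insert s(u, ζ) (insert s(ζ, v) F))) with hF'def
  have hFF' : F ⊆ F' := fun e he => .inr (.inr (.inr (.inr he)))
  have hvX : v ∈ vertexSet (insert s(u, v) F) := mem_vertexSet_right (mem_insert _ F)
  have hxX := mem_vertexSet_right hux
  have hyX := mem_vertexSet_right huy
  have huv' := h.ne (mem_insert s(u, v) F)
  have hux' : u ≠ x := h.ne hux
  have huy' : u ≠ y := h.ne huy
  have hvx : s(v, x) ∈ F := hF.mem_of_common_neighbor hF' hFF' hζF hvX hxX hxv.symm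
    (by simp [huv'.symm, hux'.symm]) (by simp [hF'def]) (by simp [hF'def])
  have hvy : s(v, y) ∈ F := hF.mem_of_common_neighbor hF' hFF' hζF hvX hyX hyv.symm
    (by simp [huv'.symm, huy'.symm]) (by simp [hF'def]) (by simp [hF'def])
  have hxyF : s(x, y) ∈ F := hF.mem_of_common_neighbor hF' hFF' hζF hxX hyX hxy
    (by simp [hxv, hux'.symm]) (by simp [hF'def]) (by simp [hF'def])
  refine ⟨F', hFF', hF',
    not_isPolygonallyPlanar_of_card_eq_five (S := {u, ζ, v, x, y}) ?_ ?_⟩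
  · simp [huv', hux', huy', hxv.symm, hyv.symm, hxy, hζne (mem_vertexSet_left hux),
      (hζne hvX).symm, (hζne hxX).symm, (hζne hyX).symm]
  · have hsymm := symm_mk_mem (insert s(u, v) F')
    have hF'mono {e : Sym2 V} (he : e ∈ insert s(u, v) F) : e ∈ insert s(u, v) F' :=
      insert_subset_insert hFF' he
    simp only [Finset.coe_insert, Finset.coe_singleton, pairwise_insert_of_symm,
      pairwise_singleton, mem_singleton_iff, forall_eq, forall_mem_insert, true_and]
    exact ⟨⟨⟨fun _ => hF'mono (.inr hxyF), fun _ => hF'mono (.inr hvx),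
      fun _ => hF'mono (.inr hvy)⟩, fun _ => .inr (by simp [hF'def]),
      fun _ => .inr (by simp [hF'def]), fun _ => .inr (by simp [hF'def])⟩,
      fun _ => .inr (by simp [hF'def]), fun _ => mem_insert _ _, fun _ => hF'mono hux,
      fun _ => hF'mono huy⟩

theorem exists_superset_not_insert [Infinite V] (h : IsPolygonallyPlanar E) (huv : s(u, v) ∉ E) :
    ∃ F, E ⊆ F ∧ IsPolygonallyPlanar F ∧ ¬IsPolygonallyPlanar (insert s(u, v) F) := by
  by_cases hE : IsPolygonallyPlanar (insert s(u, v) E)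
  · obtain ⟨E₁, x₁, x₂, hEE₁, huv₁, h₁, h₂, h₁₂, h₁v, h₂v, hE₁⟩ :=
      hE.exists_superset_two_neighbors huv
    obtain ⟨F, hE₁F, huvF, hF, hsat⟩ :=
      (hE₁.mono (subset_insert _ _)).exists_superset_isSaturatedExcept huv₁
    by_cases hFuv : IsPolygonallyPlanar (insert s(u, v) F)
    · obtain ⟨F', hFF', hF'⟩ := hFuv.exists_superset_not_insert_of_isSaturatedExcept huvF hsat
        (hE₁F h₁) (hE₁F h₂) h₁₂ h₁v h₂v
      exact ⟨F', (hEE₁.trans hE₁F).trans hFF', hF'⟩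
    · exact ⟨F, hEE₁.trans hE₁F, hF, hFuv⟩
  · exact ⟨E, subset_rfl, h, hE⟩

end IsPolygonallyPlanar

end Extension

section LastExit

variable {g : ℝ → ℝ} {a b r : ℝ}

theorem exists_eq_forall_Ioc_lt (hg : ContinuousOn g (Icc a b)) (hab : a ≤ b) (ha : g a ≤ r)
    (hb : r < g b) : ∃ t ∈ Icc a b, g t = r ∧ ∀ s ∈ Ioc t b, r < g s := by
  have hcompact : IsCompact (Icc a b ∩ g ⁻¹' Iic r) := isCompact_Icc.of_isClosed_subset
    (hg.preimage_isClosed_of_isClosed isClosed_Icc isClosed_Iic) inter_subset_left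
  obtain ⟨t, ⟨ht, htr⟩, hmax⟩ := hcompact.exists_isGreatest ⟨a, left_mem_Icc.2 hab, ha⟩
  refine ⟨t, ht, ?_, fun s hs => not_le.1 fun hsr =>
    hs.1.not_ge (hmax ⟨⟨ht.1.trans hs.1.le, hs.2⟩, hsr⟩)⟩
  obtain ⟨s, hs, hsr⟩ := intermediate_value_Icc ht.2 (hg.mono (Icc_subset_Icc_left ht.1))
    ⟨htr, hb.le⟩
  rwa [← hs.1.antisymm (hmax ⟨⟨ht.1.trans hs.1, hs.2⟩, hsr.le⟩)] at hsr

theorem exists_eq_forall_Ico_lt (hg : ContinuousOn g (Icc a b)) (hab : a ≤ b) (ha : r < g a)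
    (hb : g b ≤ r) : ∃ t ∈ Icc a b, g t = r ∧ ∀ s ∈ Ico a t, r < g s := by
  have hg' : ContinuousOn (g ∘ Neg.neg) (Icc (-b) (-a)) :=
    hg.comp continuousOn_neg fun s hs => ⟨le_neg.1 hs.2, neg_le.1 hs.1⟩
  obtain ⟨t, ht, htr, hlt⟩ := exists_eq_forall_Ioc_lt (r := r) hg' (neg_le_neg hab)
    (by simpa using hb) (by simpa using ha)
  refine ⟨-t, ⟨le_neg.1 ht.2, neg_le.1 ht.1⟩, htr, fun s hs => ?_⟩
  simpa using hlt (-s) ⟨lt_neg.1 hs.2, neg_le_neg hs.1⟩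

end LastExit

section Cores

variable {X : Type*}

/-- `IsPathTrace a b A` says that `A` is the trace of a path from `a` to `b`. -/
def IsPathTrace [TopologicalSpace X] (a b : X) (A : Set X) : Prop := ∃ γ : Path a b, range γ = A

theorem IsPathTrace.isCompact [TopologicalSpace X] {a b : X} {A : Set X} (h : IsPathTrace a b A) :
    IsCompact A := by
  obtain ⟨γ, rfl⟩ := h
  exact isCompact_range γ.continuous

theorem IsPathTrace.exists_core [PseudoMetricSpace X] {p q : X} {A : Set X} {r : ℝ}
    (h : IsPathTrace p q A) (hr : 0 ≤ r) (hpq : 2 * r < dist p q) :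
    ∃ M ⊆ A, IsCompact M ∧ IsPreconnected M ∧ ∃ a ∈ M, ∃ b ∈ M, dist a p = r ∧ dist b q = r ∧
      (∀ y ∈ M, dist y p ≤ r → y = a) ∧ ∀ y ∈ M, dist y q ≤ r → y = b := by
  obtain ⟨γ, rfl⟩ := h
  have hγ : Continuous γ.extend := γ.continuous_extend
  -- The core runs from the last exit from the ball around `p` to the next entry into the ball
  -- around `q`.
  obtain ⟨t, ht, htr, hout⟩ := exists_eq_forall_Ioc_lt (g := fun s => dist (γ.extend s) p)
    (r := r) (a := 0) (b := 1) (by fun_prop) zero_le_one (by simpa using hr)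
    (by rw [γ.extend_one, dist_comm]; linarith)
  obtain ⟨t', ht', htr', hout'⟩ := exists_eq_forall_Ico_lt (g := fun s => dist (γ.extend s) q)
    (r := r) (a := t) (b := 1) (by fun_prop) ht.2
    (by linarith [dist_triangle_left p q (γ.extend t)]) (by simpa using hr)
  refine ⟨γ.extend '' Icc t t', ?_, isCompact_Icc.image hγ,
    isPreconnected_Icc.image _ hγ.continuousOn, _, mem_image_of_mem _ (left_mem_Icc.2 ht'.1),
    _, mem_image_of_mem _ (right_mem_Icc.2 ht'.1), htr, htr', ?_, ?_⟩
  · rw [← γ.extend_range]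
    exact image_subset_range _ _
  · rintro _ ⟨s, hs, rfl⟩ hle
    rw [hs.1.eq_or_lt.resolve_right fun hlt => hle.not_gt (hout s ⟨hlt, hs.2.trans ht'.2⟩)]
  · rintro _ ⟨s, hs, rfl⟩ hle
    rw [hs.2.eq_or_lt.resolve_right fun hlt => hle.not_gt (hout' s ⟨hs.1, hlt⟩)]

end Cores

section Trimming

variable {X V : Type*} [MetricSpace X] {W : Set V} {E : Set (Sym2 V)} {pos : V → X}
  {Γ M : Sym2 V → Set X} {C : Sym2 V → V → X} {r : ℝ} {e : Sym2 V} {w : V}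

/-- The edges of a drawing after cutting off their ends: `M e` is the core that is left of the edge
`e`, and `C e w` is the port of `e` at its endpoint `w`, the point where the core reaches the sphere
of radius `r` around `pos w`. -/
structure IsTrimming (r : ℝ) (W : Set V) (E : Set (Sym2 V)) (pos : V → X) (M : Sym2 V → Set X)
    (C : Sym2 V → V → X) : Prop where
  radius_pos : 0 < r
  two_mul_radius_lt_dist : ∀ w ∈ W, ∀ w' ∈ W, w ≠ w' → 2 * r < dist (pos w) (pos w')
  pairwiseDisjoint : E.PairwiseDisjoint M
  isCompact : ∀ e ∈ E, IsCompact (M e)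
  isPreconnected : ∀ e ∈ E, IsPreconnected (M e)
  port_mem : ∀ e ∈ E, ∀ w ∈ e, C e w ∈ M e
  dist_port : ∀ e ∈ E, ∀ w ∈ e, dist (C e w) (pos w) = r
  eq_port : ∀ e ∈ E, ∀ w ∈ e, ∀ y ∈ M e, dist y (pos w) ≤ r → y = C e w
  radius_lt_dist : ∀ e ∈ E, ∀ w ∈ W, w ∉ e → ∀ y ∈ M e, r < dist y (pos w)

theorem IsDrawing.eventually_two_mul_lt_dist {P : X → X → Set X → Prop}
    (h : IsDrawing P W E pos Γ) (hW : W.Finite) :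
    ∀ᶠ r : ℝ in 𝓝[>] 0, ∀ w ∈ W, ∀ w' ∈ W, w ≠ w' → 2 * r < dist (pos w) (pos w') := by
  refine hW.eventually_all.2 fun w hw => hW.eventually_all.2 fun w' hw' => ?_
  by_cases hne : w = w'
  · simp [hne]
  · have hdist : 0 < dist (pos w) (pos w') := dist_pos.2 fun heq => hne (h.injOn hw hw' heq)
    filter_upwards [Ioo_mem_nhdsGT (half_pos hdist)] with r hr _
    linarith [hr.2]

theorem IsDrawing.eventually_lt_dist {P : X → X → Set X → Prop} (h : IsDrawing P W E pos Γ)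
    (hΓ : ∀ e ∈ E, IsCompact (Γ e)) (hW : W.Finite) :
    ∀ᶠ r : ℝ in 𝓝[>] 0, ∀ e ∈ E, ∀ w ∈ W, w ∉ e → ∀ y ∈ Γ e, r < dist y (pos w) := by
  refine h.finite.eventually_all.2 fun e he => hW.eventually_all.2 fun w hw => ?_
  by_cases hwe : w ∈ e
  · simp [hwe]
  · have hball := eventually_closedBall_subset
      ((hΓ e he).isClosed.isOpen_compl.mem_nhds fun hmem => hwe (h.mem_of_pos_mem e he w hw hmem))
    filter_upwards [mem_nhdsWithin_of_mem_nhds hball] with r hr _ y hy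
    exact not_le.1 fun hle => hr hle hy

theorem IsDrawing.exists_core (h : IsDrawing IsPathTrace W E pos Γ) (he : e ∈ E) (hr : 0 ≤ r)
    (hdist : ∀ w ∈ W, ∀ w' ∈ W, w ≠ w' → 2 * r < dist (pos w) (pos w')) :
    ∃ (M : Set X) (C : V → X), M ⊆ Γ e ∧ IsCompact M ∧ IsPreconnected M ∧
      ∀ w ∈ e, C w ∈ M ∧ dist (C w) (pos w) = r ∧ ∀ y ∈ M, dist y (pos w) ≤ r → y = C w := by
  classical
  induction e with
  | _ u v =>
    obtain ⟨M, hMΓ, hM, hM', a, haM, b, hbM, ha, hb, hua, hvb⟩ := (h.arc u v he).exists_core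
      hr (hdist u (h.mem_of_mem _ he u (by simp)) v (h.mem_of_mem _ he v (by simp)) (h.ne u v he))
    refine ⟨M, Function.update (fun _ => b) u a, hMΓ, hM, hM', fun w hw => ?_⟩
    rcases Sym2.mem_iff.1 hw with rfl | rfl
    · simpa using ⟨haM, ha, hua⟩
    · simpa [(h.ne u w he).symm] using ⟨hbM, hb, hvb⟩

theorem IsDrawing.exists_isTrimming (h : IsDrawing IsPathTrace W E pos Γ) (hW : W.Finite) :
    ∃ r M C, IsTrimming r W E pos M C := by
  have hΓ (e) (he : e ∈ E) : IsCompact (Γ e) := by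
    induction e with
    | _ u v => exact (h.arc u v he).isCompact
  obtain ⟨r, ⟨hdist, hout⟩, hr : 0 < r⟩ := ((h.eventually_two_mul_lt_dist hW).and
    (h.eventually_lt_dist hΓ hW)).and self_mem_nhdsWithin |>.exists
  have : Nonempty (V → X) := ⟨pos⟩
  choose! M C hMΓ hM hM' hC using fun e (he : e ∈ E) => h.exists_core he hr.le hdist
  refine ⟨r, M, C, hr, hdist, fun e he f hf hef => ?_, hM, hM', fun e he w hw => (hC e he w hw).1,
    fun e he w hw => (hC e he w hw).2.1, fun e he w hw => (hC e he w hw).2.2,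
    fun e he w hw hwe y hy => hout e he w hw hwe y (hMΓ e he hy)⟩
  refine disjoint_left.2 fun y hye hyf => ?_
  obtain ⟨w, hwe, -, rfl⟩ := h.exists_of_mem_inter e he f hf hef y ⟨hMΓ e he hye, hMΓ f hf hyf⟩
  obtain ⟨-, hport, heq⟩ := hC e he w hwe
  rw [← heq _ hye (by simpa using hr.le), dist_self] at hport
  exact hr.ne hport

namespace IsTrimming

theorem port_ne (T : IsTrimming r W E pos M C) (he : e ∈ E) (hw : w ∈ e) : C e w ≠ pos w :=
  dist_pos.1 (T.dist_port e he w hw ▸ T.radius_pos)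

theorem pos_notMem (T : IsTrimming r W E pos M C) (he : e ∈ E) (hw : w ∈ W) : pos w ∉ M e := by
  intro hmem
  have hdist : dist (pos w) (pos w) ≤ r := by simpa using T.radius_pos.le
  by_cases hwe : w ∈ e
  · exact T.port_ne he hwe (T.eq_port e he w hwe _ hmem hdist).symm
  · exact (T.radius_lt_dist e he w hw hwe _ hmem).not_ge hdist

end IsTrimming

end Trimming

section Approximation

variable {X V : Type*} [NormedAddCommGroup X] [NormedSpace ℝ X] {W : Set V} {E : Set (Sym2 V)}
  {pos : V → X} {Γ M : Sym2 V → Set X} {C : Sym2 V → V → X} {r : ℝ} {e f : Sym2 V} {w : V}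

theorem exists_isPolygonalChain_subset {S U : Set X} (hS : IsPreconnected S) (hU : U ∈ 𝓝ˢ S)
    {a b : X} (ha : a ∈ S) (hb : b ∈ S) : ∃ K ⊆ U, IsPolygonalChain a b K := by
  refine hS.induction₂ (fun a b => ∃ K ⊆ U, IsPolygonalChain a b K) ?_ ?_ ?_ ha hb
  · intro x hx
    obtain ⟨δ, hδ, hball⟩ := Metric.mem_nhds_iff.1 (mem_nhdsSet_iff_forall.1 hU x hx)
    filter_upwards [mem_nhdsWithin_of_mem_nhds (Metric.ball_mem_nhds x hδ)] with y hy
    exact ⟨_, ((convex_ball x δ).segment_subset (Metric.mem_ball_self hδ) hy).trans hball,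
      isPolygonalChain_segment x y⟩
  · rintro x y z - - - ⟨K, hKU, hK⟩ ⟨L, hLU, hL⟩
    exact ⟨_, union_subset hKU hLU, hK.trans hL⟩
  · rintro x y - - ⟨K, hKU, hK⟩
    exact ⟨K, hKU, hK.symm⟩

namespace IsTrimming

theorem dist_le_of_mem_segment (T : IsTrimming r W E pos M C) (he : e ∈ E) (hw : w ∈ e) {y : X}
    (hy : y ∈ segment ℝ (pos w) (C e w)) : dist y (pos w) ≤ r :=
  (convex_closedBall (pos w) r).segment_subset (Metric.mem_closedBall_self T.radius_pos.le)
    (T.dist_port e he w hw).le hy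

theorem segment_inter_segment_subset (T : IsTrimming r W E pos M C) (he : e ∈ E) (hf : f ∈ E)
    (hef : e ≠ f) (hwe : w ∈ e) (hwf : w ∈ f) :
    segment ℝ (pos w) (C e w) ∩ segment ℝ (pos w) (C f w) ⊆ {pos w} := by
  have hnorm : ‖C e w - pos w‖ = ‖C f w - pos w‖ := by
    rw [← dist_eq_norm, ← dist_eq_norm, T.dist_port e he w hwe, T.dist_port f hf w hwf]
  rw [segment_inter_segment_subset_iff (T.port_ne he hwe) (T.port_ne hf hwf),
    not_sameRay_iff_of_norm_eq hnorm]
  exact fun heq => disjoint_left.1 (T.pairwiseDisjoint he hf hef) (T.port_mem e he w hwe)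
    (sub_left_injective heq ▸ T.port_mem f hf w hwf)

theorem disjoint_segment (T : IsTrimming r W E pos M C) (he : e ∈ E) (hf : f ∈ E) (hef : e ≠ f)
    (hw : w ∈ W) (hwf : w ∈ f) : Disjoint (M e) (segment ℝ (pos w) (C f w)) := by
  refine disjoint_left.2 fun y hy hyf => ?_
  have hdist := T.dist_le_of_mem_segment hf hwf hyf
  by_cases hwe : w ∈ e
  · obtain rfl := T.eq_port e he w hwe y hy hdist
    exact T.port_ne he hwe (T.segment_inter_segment_subset he hf hef hwe hwf
      ⟨right_mem_segment ℝ _ _, hyf⟩)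
  · exact (T.radius_lt_dist e he w hw hwe y hy).not_ge hdist

theorem exists_nhdsSet (T : IsTrimming r W E pos M C) (hE : E.Finite) (hW : W.Finite) :
    ∃ U : Sym2 V → Set X, (∀ e ∈ E, U e ∈ 𝓝ˢ (M e)) ∧ E.PairwiseDisjoint U ∧
      (∀ e ∈ E, ∀ w ∈ W, pos w ∉ U e) ∧ ∀ e ∈ E, ∀ f ∈ E, e ≠ f → ∀ w ∈ W, w ∈ f →
        Disjoint (U e) (segment ℝ (pos w) (C f w)) := by
  have hfilter : E.PairwiseDisjoint fun e => 𝓝ˢ (M e) := fun e he f hf hef =>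
    separatedNhds_iff_disjoint.1 <| .of_isCompact_isCompact (T.isCompact e he) (T.isCompact f hf)
      (T.pairwiseDisjoint he hf hef)
  obtain ⟨U, hU, hdisj⟩ := hfilter.exists_mem_filter hE
  have hpos (e) (he : e ∈ E) : ∀ᶠ y in 𝓝ˢ (M e), ∀ w ∈ W, y ≠ pos w :=
    hW.eventually_all.2 fun w hw => isOpen_ne.mem_nhdsSet.2
      fun y hy heq => T.pos_notMem he hw (heq ▸ hy)
  have hseg (e) (he : e ∈ E) : ∀ᶠ y in 𝓝ˢ (M e), ∀ f ∈ E, ∀ w ∈ W, e ≠ f → w ∈ f →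
      y ∉ segment ℝ (pos w) (C f w) := by
    refine hE.eventually_all.2 fun f hf => hW.eventually_all.2 fun w hw => ?_
    by_cases hne : e ≠ f ∧ w ∈ f
    · filter_upwards [(isCompact_segment (pos w) (C f w)).isClosed.isOpen_compl.mem_nhdsSet.2
        (T.disjoint_segment he hf hne.1 hw hne.2).subset_compl_right] with y hy _ _ using hy
    · exact .of_forall fun y hef hwf => absurd ⟨hef, hwf⟩ hne
  refine ⟨fun e => U e ∩ {y | (∀ w ∈ W, y ≠ pos w) ∧
    ∀ f ∈ E, ∀ w ∈ W, e ≠ f → w ∈ f → y ∉ segment ℝ (pos w) (C f w)},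
    fun e he => inter_mem (hU e) ((hpos e he).and (hseg e he)),
    hdisj.mono fun e => inter_subset_left, fun e _ w hw hmem => hmem.2.1 w hw rfl,
    fun e _ f hf hef w hw hwf => disjoint_left.2 fun y hy => hy.2.2 f hf w hw hef hwf⟩

theorem exists_isPolygonalArc (T : IsTrimming r W E pos M C) (he : e ∈ E) {U : Set X}
    (hU : U ∈ 𝓝ˢ (M e)) : ∃ A, (∀ u v, e = s(u, v) → IsPolygonalArc (pos u) (pos v) A) ∧
      ∀ y ∈ A, y ∈ U ∨ ∃ w ∈ e, y ∈ segment ℝ (pos w) (C e w) := by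
  induction e with
  | _ u v =>
    obtain ⟨K, hKU, hK⟩ := exists_isPolygonalChain_subset (T.isPreconnected _ he) hU
      (T.port_mem _ he u (by simp)) (T.port_mem _ he v (by simp))
    obtain ⟨A, hAK, hA⟩ := ((isPolygonalChain_segment (pos u) _).trans
      (hK.trans (isPolygonalChain_segment (pos v) _).symm)).exists_isPolygonalArc
    refine ⟨A, fun a b hab => ?_, fun y hy => ?_⟩
    · rcases Sym2.eq_iff.1 hab with ⟨rfl, rfl⟩ | ⟨rfl, rfl⟩
      exacts [hA, hA.symm]
    · rcases hAK hy with hyu | hyK | hyv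
      exacts [.inr ⟨u, by simp, hyu⟩, .inl (hKU hyK), .inr ⟨v, by simp, hyv⟩]

theorem exists_isDrawing (T : IsTrimming r W E pos M C) {P : X → X → Set X → Prop}
    (h : IsDrawing P W E pos Γ) (hW : W.Finite) : ∃ A, IsDrawing IsPolygonalArc W E pos A := by
  obtain ⟨U, hUM, hUU, hUpos, hUseg⟩ := T.exists_nhdsSet h.finite hW
  choose! A hA hAU using fun e he => T.exists_isPolygonalArc he (hUM e he)
  refine ⟨A, h.finite, h.mem_of_mem, h.ne, h.injOn, fun u v he => hA _ he u v rfl, ?_, ?_⟩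
  · rintro e he f hf hef y ⟨hye, hyf⟩
    rcases hAU e he y hye with hyU | ⟨w, hwe, hyw⟩ <;>
      rcases hAU f hf y hyf with hyU' | ⟨w', hwf, hyw'⟩
    · exact absurd hyU' (disjoint_left.1 (hUU he hf hef) hyU)
    · exact absurd hyw'
        (disjoint_left.1 (hUseg e he f hf hef w' (h.mem_of_mem f hf w' hwf) hwf) hyU)
    · exact absurd hyw
        (disjoint_left.1 (hUseg f hf e he hef.symm w (h.mem_of_mem e he w hwe) hwe) hyU')
    · obtain rfl : w = w' := by
        by_contra hne
        linarith [dist_triangle_left (pos w) (pos w') y, T.dist_le_of_mem_segment he hwe hyw,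
          T.dist_le_of_mem_segment hf hwf hyw', T.two_mul_radius_lt_dist w
            (h.mem_of_mem e he w hwe) w' (h.mem_of_mem f hf w' hwf) hne]
      exact ⟨w, hwe, hwf, (T.segment_inter_segment_subset he hf hef hwe hwf ⟨hyw, hyw'⟩).symm⟩
  · intro e he w hw hy
    obtain ⟨w', hw', hyw⟩ := (hAU e he _ hy).resolve_left (hUpos e he w hw)
    by_contra hwe
    linarith [T.radius_pos, T.dist_le_of_mem_segment he hw' hyw, T.two_mul_radius_lt_dist w hw w'
      (h.mem_of_mem e he w' hw') fun heq => hwe (heq ▸ hw')]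

end IsTrimming

theorem IsDrawing.isPolygonallyPlanar {pos : V → ℂ} {Γ : Sym2 V → Set ℂ}
    (h : IsDrawing IsPathTrace W E pos Γ) : IsPolygonallyPlanar E := by
  have hW := finite_vertexSet h.finite
  obtain ⟨r, M, C, T⟩ := h.restrict_vertexSet.exists_isTrimming hW
  exact ⟨vertexSet E, pos, T.exists_isDrawing h.restrict_vertexSet hW⟩

end Approximation

section ArcTraces

variable {X Y : Type*} [TopologicalSpace X] [TopologicalSpace Y] {a b c : X} {A B : Set X}

theorem IsPathTrace.symm (h : IsPathTrace a b A) : IsPathTrace b a A := by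
  obtain ⟨γ, rfl⟩ := h
  exact ⟨γ.symm, γ.symm_range⟩

theorem isPathTrace_image_Icc {f : ℝ → X} (hf : ContinuousOn f (Icc 0 1)) :
    IsPathTrace (f 0) (f 1) (f '' Icc 0 1) :=
  ⟨⟨⟨_, hf.domRestrict⟩, rfl, rfl⟩, range_domRestrict f _⟩

theorem IsPathTrace.image (h : IsPathTrace a b A) {g : X → Y} (hg : Continuous g) :
    IsPathTrace (g a) (g b) (g '' A) := by
  obtain ⟨γ, rfl⟩ := h
  exact ⟨γ.map hg, range_comp g γ⟩

/-- `IsArcTrace a b A` says that `A` is the trace of an injective path from `a` to `b`. -/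
def IsArcTrace (a b : X) (A : Set X) : Prop :=
  ∃ γ : Path a b, Function.Injective γ ∧ range γ = A

theorem IsArcTrace.image (h : IsArcTrace a b A) {g : X → Y} (hg : Continuous g)
    (hgi : Function.Injective g) : IsArcTrace (g a) (g b) (g '' A) := by
  obtain ⟨γ, hγ, rfl⟩ := h
  exact ⟨γ.map hg, hgi.comp hγ, range_comp g γ⟩

theorem IsArcTrace.trans (hA : IsArcTrace a b A) (hB : IsArcTrace b c B) (hAB : A ∩ B ⊆ {b}) :
    IsArcTrace a c (A ∪ B) := by
  obtain ⟨γ, hγ, rfl⟩ := hA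
  obtain ⟨γ', hγ', rfl⟩ := hB
  refine ⟨γ.trans γ', ?_, γ.trans_range γ'⟩
  have hne (s t : unitInterval) (hs : (s : ℝ) ≤ 1 / 2) (ht : ¬(t : ℝ) ≤ 1 / 2) :
      γ.trans γ' s ≠ γ.trans γ' t := by
    intro hst
    rw [Path.trans_apply, Path.trans_apply, dif_pos hs, dif_neg ht] at hst
    have hb := hAB ⟨⟨_, hst⟩, mem_range_self _⟩
    have h0 := congrArg Subtype.val (hγ' (hb.trans γ'.source.symm))
    simp only [Icc.coe_zero] at h0
    linarith
  intro s t hst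
  by_cases hs : (s : ℝ) ≤ 1 / 2 <;> by_cases ht : (t : ℝ) ≤ 1 / 2
  · rw [Path.trans_apply, Path.trans_apply, dif_pos hs, dif_pos ht] at hst
    have h := congrArg Subtype.val (hγ hst)
    exact Subtype.ext (by simpa using h)
  · exact absurd hst (hne s t hs ht)
  · exact absurd hst.symm (hne t s ht hs)
  · rw [Path.trans_apply, Path.trans_apply, dif_neg hs, dif_neg ht] at hst
    have h := congrArg Subtype.val (hγ' hst)
    exact Subtype.ext (by simpa using h)

end ArcTraces

section PolygonalArcTraces

variable {E : Type*} [NormedAddCommGroup E] [NormedSpace ℝ E] {a b : E} {A : Set E}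

theorem isArcTrace_segment (hab : a ≠ b) : IsArcTrace a b (segment ℝ a b) := by
  refine ⟨⟨⟨fun t => AffineMap.lineMap a b (t : ℝ), ?_⟩, ?_, ?_⟩, ?_, ?_⟩
  · exact AffineMap.lineMap_continuous.comp continuous_subtype_val
  · simp
  · simp
  · exact (AffineMap.lineMap_injective ℝ hab).comp Subtype.val_injective
  · rw [segment_eq_image_lineMap, image_eq_range]
    rfl

theorem IsPolygonalArc.eq_singleton (h : IsPolygonalArc a a A) : A = {a} := by
  cases h with
  | refl => rfl
  | cons hA hab hint =>
    exact absurd (hint ⟨left_mem_segment ℝ a _, hA.right_mem⟩) hab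

theorem IsPolygonalArc.isArcTrace (h : IsPolygonalArc a b A) (hab : a ≠ b) : IsArcTrace a b A := by
  induction h with
  | refl a => exact absurd rfl hab
  | @cons a b c A hA hne hint ih =>
    by_cases hbc : b = c
    · subst hbc
      rw [hA.eq_singleton, union_eq_left.2 (singleton_subset_iff.2 (right_mem_segment ℝ a b))]
      exact isArcTrace_segment hne
    · exact (isArcTrace_segment hne).trans (ih hbc) hint

end PolygonalArcTraces

theorem IsDrawing.image {V X Y : Type*} {P : X → X → Set X → Prop} {Q : Y → Y → Set Y → Prop}
    {W : Set V} {E : Set (Sym2 V)} {pos : V → X} {A : Sym2 V → Set X} (h : IsDrawing P W E pos A)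
    {g : X → Y} (hg : Function.Injective g)
    (hPQ : ∀ a b C, a ≠ b → P a b C → Q (g a) (g b) (g '' C)) :
    IsDrawing Q W E (g ∘ pos) fun e => g '' A e where
  finite := h.finite
  mem_of_mem := h.mem_of_mem
  ne := h.ne
  injOn := hg.comp_injOn h.injOn
  arc u v he := hPQ _ _ _ (h.pos_ne he) (h.arc u v he)
  exists_of_mem_inter e he f hf hef y hy := by
    rw [← image_inter hg] at hy
    obtain ⟨x, hx, rfl⟩ := hy
    obtain ⟨w, hwe, hwf, rfl⟩ := h.exists_of_mem_inter e he f hf hef x hx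
    exact ⟨w, hwe, hwf, rfl⟩
  mem_of_pos_mem e he w hw hy := h.mem_of_pos_mem e he w hw (hg.mem_set_image.1 hy)

section EdgeSets

variable {V : Type*} {e : {e : Finset V // e.card = 2}} {u v w : V}

theorem exists_sym2_forall_mem_iff (e : {e : Finset V // e.card = 2}) :
    ∃ z : Sym2 V, ∀ w, w ∈ z ↔ w ∈ e.1 := by
  classical
  obtain ⟨u, v, -, h⟩ := Finset.card_eq_two.1 e.2
  exact ⟨s(u, v), fun w => by simp [h]⟩

/-- A two-element set as an unordered pair, the form in which edges are drawn. -/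
noncomputable def edgeSym2 (e : {e : Finset V // e.card = 2}) : Sym2 V :=
  (exists_sym2_forall_mem_iff e).choose

theorem mem_edgeSym2 : w ∈ edgeSym2 e ↔ w ∈ e.1 := (exists_sym2_forall_mem_iff e).choose_spec w

theorem edgeSym2_injective : Function.Injective (edgeSym2 (V := V)) := fun e f h =>
  Subtype.ext (Finset.ext fun w => by rw [← mem_edgeSym2, h, mem_edgeSym2])

theorem ne_of_edgeSym2_eq (h : edgeSym2 e = s(u, v)) : u ≠ v := by
  rintro rfl
  have he : e.1 = {u} := Finset.ext fun w => by simp [← mem_edgeSym2, h]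
  exact absurd e.2 (by simp [he])

theorem edgeSym2_eq [DecidableEq V] (h : e.1 = {u, v}) : edgeSym2 e = s(u, v) :=
  Sym2.ext fun w => by simp [mem_edgeSym2, h]

end EdgeSets

namespace EGraph

variable {V : Type} [DecidableEq V] {G H : EGraph V} {e : {e : Finset V // e.card = 2}} {w : V}

theorem mem_verts : w ∈ G.verts ↔ ∃ e ∈ G, w ∈ e.1 := Finset.mem_sup

/-- The edge set of a graph as a set of unordered pairs, as drawings expect it. -/
def sym2Set (G : EGraph V) : Set (Sym2 V) := edgeSym2 '' (G : Set {e : Finset V // e.card = 2})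

theorem edgeSym2_mem_sym2Set : edgeSym2 e ∈ G.sym2Set ↔ e ∈ G :=
  edgeSym2_injective.mem_set_image

theorem vertexSet_sym2Set (G : EGraph V) : vertexSet G.sym2Set = G.verts := by
  ext w
  simp [vertexSet, sym2Set, mem_verts, mem_edgeSym2]

theorem IsPlanar.exists_isDrawing (h : G.IsPlanar) :
    ∃ (pos : V → ℝ × ℝ) (A : Sym2 V → Set (ℝ × ℝ)),
      IsDrawing IsPathTrace (G.verts : Set V) G.sym2Set pos A := by
  obtain ⟨pos, arc, hinj, hcont, hends, hinter, hvert⟩ := h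
  set A := Function.extend edgeSym2 (fun e => arc e '' Icc 0 1) fun _ => ∅
  have hA (e) : A (edgeSym2 e) = arc e '' Icc 0 1 := edgeSym2_injective.extend_apply ..
  refine ⟨pos, A, G.finite_toSet.image _, ?_, ?_, hinj, ?_, ?_, ?_⟩
  · rintro _ ⟨e, he, rfl⟩ w hw
    exact mem_verts.2 ⟨e, he, mem_edgeSym2.1 hw⟩
  · rintro u v ⟨e, -, he⟩
    exact ne_of_edgeSym2_eq he
  · rintro u v ⟨e, he, heq⟩
    obtain ⟨u', v', -, he', h0, h1⟩ := hends e he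
    have htrace := isPathTrace_image_Icc (hcont e he).1
    rw [h0, h1] at htrace
    rw [← heq, hA]
    rcases Sym2.eq_iff.1 ((edgeSym2_eq he').symm.trans heq) with ⟨rfl, rfl⟩ | ⟨rfl, rfl⟩
    exacts [htrace, htrace.symm]
  · rintro _ ⟨e, he, rfl⟩ _ ⟨f, hf, rfl⟩ hef y hy
    rw [hA, hA] at hy
    obtain ⟨w, hw, rfl⟩ := hinter e he f hf (ne_of_apply_ne _ hef) hy
    obtain ⟨hwe, hwf⟩ := Finset.mem_inter.1 (Finset.mem_coe.1 hw)
    exact ⟨w, mem_edgeSym2.2 hwe, mem_edgeSym2.2 hwf, rfl⟩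
  · rintro _ ⟨e, he, rfl⟩ w hw hy
    rw [hA] at hy
    exact mem_edgeSym2.2 (hvert e he w hw hy)

theorem exists_arc_of_isDrawing {W : Set V} {pos : V → ℝ × ℝ} {A : Sym2 V → Set (ℝ × ℝ)}
    (h : IsDrawing IsArcTrace W G.sym2Set pos A) (he : e ∈ G) :
    ∃ f : ℝ → ℝ × ℝ, ContinuousOn f (Icc 0 1) ∧ InjOn f (Icc 0 1) ∧
      (∃ u v : V, u ≠ v ∧ e.1 = {u, v} ∧ f 0 = pos u ∧ f 1 = pos v) ∧
      f '' Icc 0 1 = A (edgeSym2 e) := by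
  obtain ⟨u, v, huv, he'⟩ := Finset.card_eq_two.1 e.2
  have hE := edgeSym2_mem_sym2Set.2 he
  rw [edgeSym2_eq he'] at hE ⊢
  obtain ⟨γ, hγ, hγA⟩ := h.arc u v hE
  refine ⟨γ.extend, γ.continuous_extend.continuousOn, ?_,
    ⟨u, v, huv, he', γ.extend_zero, γ.extend_one⟩, (γ.image_extend_of_subset subset_rfl).trans hγA⟩
  intro s hs t ht hst
  rw [γ.extend_apply hs, γ.extend_apply ht] at hst
  exact congrArg Subtype.val (hγ hst)

theorem isPlanar_of_isDrawing {pos : V → ℝ × ℝ} {A : Sym2 V → Set (ℝ × ℝ)}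
    (h : IsDrawing IsArcTrace (G.verts : Set V) G.sym2Set pos A) : G.IsPlanar := by
  choose! arc hcont hinj hends hA using fun e he => exists_arc_of_isDrawing (e := e) h he
  refine ⟨pos, arc, h.injOn, fun e he => ⟨hcont e he, hinj e he⟩, hends, ?_, ?_⟩
  · intro e he f hf hef y hy
    rw [hA e he, hA f hf] at hy
    obtain ⟨w, hwe, hwf, rfl⟩ := h.exists_of_mem_inter _ (edgeSym2_mem_sym2Set.2 he) _
      (edgeSym2_mem_sym2Set.2 hf) (edgeSym2_injective.ne hef) y hy
    exact ⟨w, Finset.mem_inter.2 ⟨mem_edgeSym2.1 hwe, mem_edgeSym2.1 hwf⟩, rfl⟩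
  · intro e he w hw hy
    rw [hA e he] at hy
    exact mem_edgeSym2.1 (h.mem_of_pos_mem _ (edgeSym2_mem_sym2Set.2 he) w hw hy)

theorem isPlanar_iff_isPolygonallyPlanar : G.IsPlanar ↔ IsPolygonallyPlanar G.sym2Set := by
  set L := Complex.equivRealProdCLM
  constructor
  · intro h
    obtain ⟨pos, A, h⟩ := h.exists_isDrawing
    exact (h.image L.symm.injective fun _ _ _ _ hC => hC.image
      L.symm.continuous).isPolygonallyPlanar
  · rintro ⟨W, pos, A, h⟩
    have h' := h.restrict_vertexSet
    rw [vertexSet_sym2Set] at h'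
    exact isPlanar_of_isDrawing (h'.image L.injective fun _ _ _ hab hC =>
      (hC.isArcTrace hab).image L.continuous L.injective)

theorem IsPlanar.mono (h : H.IsPlanar) (hGH : G ⊆ H) : G.IsPlanar :=
  isPlanar_iff_isPolygonallyPlanar.2
    ((isPlanar_iff_isPolygonallyPlanar.1 h).mono (image_mono hGH))

theorem sym2Set_union (G H : EGraph V) : (G ∪ H).sym2Set = G.sym2Set ∪ H.sym2Set := by
  rw [sym2Set, Finset.coe_union, image_union, sym2Set, sym2Set]

theorem exists_sym2Set_eq {E : Set (Sym2 V)} (hE : E.Finite) (hne : ∀ u v, s(u, v) ∈ E → u ≠ v) :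
    ∃ F : EGraph V, F.sym2Set = E := by
  have hfin := hE.preimage edgeSym2_injective.injOn
  refine ⟨hfin.toFinset, ?_⟩
  rw [sym2Set, hfin.coe_toFinset, image_preimage_eq_iff]
  intro z hz
  induction z with
  | _ u v => exact ⟨⟨{u, v}, Finset.card_pair (hne u v hz)⟩, edgeSym2_eq rfl⟩

theorem subset_of_forall_isPlanar_union [Infinite V] (hH : H.IsPlanar)
    (hGH : ∀ F : EGraph V, (H ∪ F).IsPlanar → (G ∪ F).IsPlanar) : G ⊆ H := by
  intro e he
  by_contra heH
  obtain ⟨u, v, -, he'⟩ := Finset.card_eq_two.1 e.2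
  rw [← edgeSym2_mem_sym2Set, edgeSym2_eq he'] at he heH
  obtain ⟨E, hHE, hE, hinsert⟩ :=
    (isPlanar_iff_isPolygonallyPlanar.1 hH).exists_superset_not_insert heH
  obtain ⟨F, rfl⟩ := exists_sym2Set_eq hE.finite fun _ _ => hE.ne
  have hHF : (H ∪ F).IsPlanar := by
    rwa [isPlanar_iff_isPolygonallyPlanar, sym2Set_union, union_eq_right.2 hHE]
  have hGF := isPlanar_iff_isPolygonallyPlanar.1 (hGH F hHF)
  rw [sym2Set_union] at hGF
  exact hinsert (hGF.mono (insert_subset (.inl he) subset_union_right))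

end EGraph

theorem stmt14_general {V : Type} [Infinite V] [DecidableEq V] (G H : EGraph V) :
    (∀ F : EGraph V, (¬ EGraph.IsPlanar (G ∪ F) ↔ ¬ EGraph.IsPlanar (H ∪ F))) ↔
      ((¬ EGraph.IsPlanar G ∧ ¬ EGraph.IsPlanar H) ∨ G = H) := by
  simp only [not_iff_not]
  constructor
  · intro h
    have hGH : G.IsPlanar ↔ H.IsPlanar := by simpa using h ∅
    by_cases hG : G.IsPlanar
    · exact .inr (Finset.Subset.antisymm
        (EGraph.subset_of_forall_isPlanar_union (hGH.1 hG) fun F => (h F).2)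
        (EGraph.subset_of_forall_isPlanar_union hG fun F => (h F).1))
    · exact .inl ⟨hG, hGH.not.1 hG⟩
  · rintro (⟨hG, hH⟩ | rfl) F
    · exact iff_of_false (fun h => hG (h.mono Finset.subset_union_left))
        fun h => hH (h.mono Finset.subset_union_left)
    · rfl

/-- The property of non-planarity is strong. -/
theorem stmt14 {V : Type} [Countable V] [Infinite V] [DecidableEq V]
    (G H : EGraph V) :
    (∀ F : EGraph V, (¬ EGraph.IsPlanar (G ∪ F) ↔ ¬ EGraph.IsPlanar (H ∪ F))) ↔
      ((¬ EGraph.IsPlanar G ∧ ¬ EGraph.IsPlanar H) ∨ G = H) :=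
  stmt14_general G H
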